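/- Let V be a valuation ring containing its residue field k, with value group Γ a free abelian group. Then V is a filtered union of its k-subalgebras that are complete intersection k-algebras; that is, the set of such subalgebras is nonempty, directed under inclusion, and its union is all of V. -/

import Mathlib

/-- A commutative ring `S` is a *filtered union* of those of its `R`-subalgebras
satisfying the class (predicate) `C` if the collection of subalgebras satisfying `C`
is nonempty, directed under inclusion, and its union is all of `S`. -/
def Subalgebra.IsFilteredUnion {R S : Type*} [CommSemiring R] [CommSemiring S]
    [Algebra R S] (C : Subalgebra R S → Prop) : Prop :=
  (∃ A, C A) ∧ DirectedOn (· ≤ ·) {A | C A} ∧ ∀ s : S, ∃ A, C A ∧ s ∈ A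

/-- An `R`-algebra `A` is a *complete intersection `R`-algebra of finite type* if it is
isomorphic to `R[Y₁, …, Y_N]/(f₁, …, f_r)` for a regular sequence `f₁, …, f_r` of the
polynomial ring `R[Y₁, …, Y_N]`. -/
def Algebra.IsCompleteIntersectionOfFiniteType (R A : Type*) [CommRing R] [CommRing A]
    [Algebra R A] : Prop :=
  ∃ (N r : ℕ) (f : Fin r → MvPolynomial (Fin N) R),
    RingTheory.Sequence.IsRegular (MvPolynomial (Fin N) R) (List.ofFn f) ∧
    Nonempty ((MvPolynomial (Fin N) R ⧸ Ideal.span (Set.range f)) ≃ₐ[R] A)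

/-!
A finitely generated subalgebra of `V` involves only finitely many elements, so it suffices to
place each finite subset of `V` inside a complete intersection subalgebra. Let `σ` be a
multiplicative section of the valuation; it exists because the value group is free. That every
finite subset of the valuation ring lies in the localization, at the centre of the valuation, of a
complete intersection subalgebra holds for the field `k(σ(Γ))`, by Perron's algorithm and the
algebraic independence of monomials with independent values, and this property passes from a
field `L` to `L(y)`.

For the latter, lift `L(y)` to a localization `Λ` of `L[X]`, which equals `L(y)` if `y` is
transcendental. Over a large enough local complete intersection `R ⊆ L`, build by induction on `n`
a local complete intersection `O ⊆ Λ` in which the values at `y` of finitely many given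
polynomials of degree at most `n` are monomials `σ γ` times elements of `O`. In the inductive step
one adjoins `z = F(y) / c` with `c` a monomial, and `O[z] = O[X] / (c X - F)` remains a complete
intersection because `F` stays regular modulo the ideals of `R`. If `y` is algebraic, the kernel
of `O → L(y)` is generated by the factor `F` of its minimal polynomial, again a regular element.
-/

open Polynomial Algebra
open Subalgebra (inclusion)

theorem ideal_ofList_ofFn {R : Type*} [CommRing R] {r : ℕ} (f : Fin r → R) :
    Ideal.ofList (List.ofFn f) = Ideal.span (Set.range f) := by
  simp only [Ideal.ofList, List.mem_ofFn']
  rfl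

namespace Algebra.IsCompleteIntersectionOfFiniteType

open RingTheory.Sequence

variable {k A B : Type*} [Field k] [CommRing A] [Algebra k A] [CommRing B] [Algebra k B]

theorem iff_exists_surjective : IsCompleteIntersectionOfFiniteType k A ↔
    Nontrivial A ∧ ∃ (N : ℕ) (rs : List (MvPolynomial (Fin N) k))
      (π : MvPolynomial (Fin N) k →ₐ[k] A), IsWeaklyRegular (MvPolynomial (Fin N) k) rs ∧
        Function.Surjective π ∧ RingHom.ker π = Ideal.ofList rs := by
  constructor
  · rintro ⟨N, r, f, hf, ⟨e⟩⟩
    refine ⟨?_, N, List.ofFn f, e.toAlgHom.comp (Ideal.Quotient.mkₐ k _), hf.1,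
      e.surjective.comp Ideal.Quotient.mk_surjective, ?_⟩
    · have : Nontrivial (MvPolynomial (Fin N) k ⧸ Ideal.span (Set.range f)) := by
        rw [Ideal.Quotient.nontrivial_iff, ← ideal_ofList_ofFn]
        exact fun h ↦ hf.2 (by simp [h])
      exact e.symm.toEquiv.nontrivial
    · ext x
      simp [ideal_ofList_ofFn, RingHom.mem_ker, Ideal.Quotient.eq_zero_iff_mem]
  · rintro ⟨hA, N, rs, π, hreg, hsurj, hker⟩
    refine ⟨N, rs.length, rs.get, ⟨by simpa using hreg, ?_⟩, ⟨?_⟩⟩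
    · rw [List.ofFn_get, ← hker, smul_eq_mul, Ideal.mul_top]
      exact (RingHom.ker_ne_top π).symm
    · refine (Ideal.quotientEquivAlgOfEq k ?_).trans
        (Ideal.quotientKerAlgEquivOfSurjective hsurj)
      rw [← ideal_ofList_ofFn, List.ofFn_get, hker]

theorem finiteType (h : IsCompleteIntersectionOfFiniteType k A) : Algebra.FiniteType k A := by
  obtain ⟨-, N, rs, π, -, hsurj, -⟩ := iff_exists_surjective.1 h
  exact Algebra.FiniteType.of_surjective π hsurj

theorem of_algEquiv (h : IsCompleteIntersectionOfFiniteType k A) (e : A ≃ₐ[k] B) :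
    IsCompleteIntersectionOfFiniteType k B := by
  obtain ⟨N, r, f, hf, ⟨e'⟩⟩ := h
  exact ⟨N, r, f, hf, ⟨e'.trans e⟩⟩

theorem mvPolynomial (N : ℕ) : IsCompleteIntersectionOfFiniteType k (MvPolynomial (Fin N) k) :=
  iff_exists_surjective.2 ⟨inferInstance, N, [], AlgHom.id k _, .nil _ _,
    Function.surjective_id, by ext; simp⟩

theorem of_surjective_of_algEquiv [Nontrivial A] {Q : Type*} [CommRing Q] [Algebra k Q] {N : ℕ}
    (e : MvPolynomial (Fin N) k ≃ₐ[k] Q) {rs : List Q} (hrs : IsWeaklyRegular Q rs)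
    (π : Q →ₐ[k] A) (hπ : Function.Surjective π) (hker : RingHom.ker π = Ideal.ofList rs) :
    IsCompleteIntersectionOfFiniteType k A := by
  refine iff_exists_surjective.2 ⟨inferInstance, N, rs.map (e.symm : Q →+* _),
    π.comp e.toAlgHom, ?_, hπ.comp e.surjective, ?_⟩
  · refine (AddEquiv.isWeaklyRegular_congr (e := e.symm.toRingEquiv.toAddEquiv) ?_).1 hrs
    rw [List.forall₂_map_right_iff, List.forall₂_same]
    intro x _ y
    simp
  · rw [← Ideal.map_ofList, ← hker]
    change RingHom.ker ((π : Q →+* A).comp (e : MvPolynomial (Fin N) k →+* Q)) = _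
    rw [← RingHom.comap_ker]
    exact (Ideal.map_symm (e : MvPolynomial (Fin N) k ≃+* Q)).symm

theorem polynomial (h : IsCompleteIntersectionOfFiniteType k A) :
    IsCompleteIntersectionOfFiniteType k A[X] := by
  obtain ⟨hA, N, rs, π, hreg, hsurj, hker⟩ := iff_exists_surjective.1 h
  refine of_surjective_of_algEquiv (MvPolynomial.finSuccEquiv k N) (rs := rs.map C)
    (IsWeaklyRegular.of_flat (S := (MvPolynomial (Fin N) k)[X]) hreg)
    (Polynomial.mapAlgHom π) (Polynomial.map_surjective π.toRingHom hsurj) ?_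
  rw [← Ideal.map_ofList, ← hker]
  exact Polynomial.ker_mapRingHom (π : MvPolynomial (Fin N) k →+* A)

theorem quotient_span_singleton [IsDomain A] (h : IsCompleteIntersectionOfFiniteType k A)
    {a : A} (ha : a ≠ 0) (hu : ¬ IsUnit a) :
    IsCompleteIntersectionOfFiniteType k (A ⧸ Ideal.span {a}) := by
  obtain ⟨_, N, rs, π, hreg, hsurj, hker⟩ := iff_exists_surjective.1 h
  obtain ⟨b, rfl⟩ := hsurj a
  refine iff_exists_surjective.2 ⟨?_, N, rs ++ [b], (Ideal.Quotient.mkₐ k _).comp π, ?_,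
    Ideal.Quotient.mk_surjective.comp hsurj, ?_⟩
  · rwa [Ideal.Quotient.nontrivial_iff, Ne, Ideal.span_singleton_eq_top]
  · rw [isWeaklyRegular_append_iff, isWeaklyRegular_singleton_iff]
    refine ⟨hreg, isSMulRegular_iff_right_eq_zero_of_smul.2 fun x hx ↦ ?_⟩
    obtain ⟨x, rfl⟩ := Submodule.Quotient.mk_surjective _ x
    rw [← Submodule.Quotient.mk_smul, Submodule.Quotient.mk_eq_zero, smul_eq_mul, smul_eq_mul,
      Ideal.mul_top, ← hker, RingHom.mem_ker, map_mul] at hx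
    rw [Submodule.Quotient.mk_eq_zero, smul_eq_mul, Ideal.mul_top, ← hker, RingHom.mem_ker]
    exact (mul_eq_zero.1 hx).resolve_left ha
  · have hcomap : Ideal.comap π (Ideal.span {π b}) = Ideal.span {b} ⊔ RingHom.ker π := by
      simpa [Ideal.map_span] using Ideal.comap_map_of_surjective' π hsurj (Ideal.span {b})
    rw [Ideal.ofList_append, Ideal.ofList_singleton, ← hker, sup_comm, ← hcomap]
    ext x
    simp [RingHom.mem_ker, Ideal.Quotient.eq_zero_iff_mem]

end Algebra.IsCompleteIntersectionOfFiniteType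

section LinearRelation

variable {S T : Type*} [CommRing S] [CommRing T]

theorem mem_map_C_of_C_mul_X_sub_C_mul_mem {I : Ideal S} {c F : S} (hF : ∀ b, F * b ∈ I → b ∈ I)
    {s : S[X]} (hs : (C c * X - C F) * s ∈ I.map C) : s ∈ I.map C := by
  rw [Ideal.mem_map_C_iff] at hs ⊢
  intro n
  induction n with
  | zero =>
    have hs0 := hs 0
    rw [sub_mul, mul_assoc, coeff_sub, coeff_C_mul, coeff_C_mul, coeff_X_mul_zero, mul_zero,
      zero_sub, neg_mem_iff] at hs0
    exact hF _ hs0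
  | succ n ih =>
    have hsn := hs (n + 1)
    rw [sub_mul, mul_assoc, coeff_sub, coeff_C_mul, coeff_C_mul, coeff_X_mul] at hsn
    exact hF _ ((Submodule.sub_mem_iff_right _ (Ideal.mul_mem_left _ c ih)).1 hsn)

theorem mem_map_C_of_mul_mem {I : Ideal S} {H p : S[X]} {n : ℕ} (hH : IsUnit (H.coeff n))
    (hp : H * p ∈ I.map C) : p ∈ I.map C := by
  have hker : I.map C = RingHom.ker (mapRingHom (Ideal.Quotient.mk I)) := by
    rw [ker_mapRingHom, Ideal.mk_ker]
  rw [hker, RingHom.mem_ker] at hp ⊢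
  have hreg : mapRingHom (Ideal.Quotient.mk I) H ∈ nonZeroDivisors (S ⧸ I)[X] := by
    rw [Polynomial.mem_nonZeroDivisors_iff]
    intro a ha
    have hcoeff := congrArg (fun r ↦ coeff r n) ha
    simp only [coeff_smul, coe_mapRingHom, coeff_map, smul_eq_mul, coeff_zero] at hcoeff
    exact (hH.map (Ideal.Quotient.mk I)).mul_left_eq_zero.1 hcoeff
  rw [map_mul, mul_comm] at hp
  exact (mul_right_mem_nonZeroDivisors_eq_zero_iff hreg).1 hp

variable [IsDomain S] {c F : S}

theorem C_mul_X_sub_C_dvd_of_dvd_C_mul (hc : c ≠ 0) (hF : ∀ b, c ∣ F * b → c ∣ b) {p : S[X]}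
    (hp : C c * X - C F ∣ C c * p) : C c * X - C F ∣ p := by
  obtain ⟨s, hs⟩ := hp
  simp only [← Ideal.mem_span_singleton] at hF
  have hsmem : s ∈ (Ideal.span {c}).map (C : S →+* S[X]) := by
    refine mem_map_C_of_C_mul_X_sub_C_mul_mem hF (c := c) ?_
    rw [← hs]
    exact Ideal.mul_mem_right _ _ (Ideal.mem_map_of_mem _ (Ideal.mem_span_singleton_self c))
  rw [Ideal.map_span, Set.image_singleton, Ideal.mem_span_singleton] at hsmem
  obtain ⟨t, rfl⟩ := hsmem
  exact ⟨t, mul_left_cancel₀ (C_ne_zero.2 hc) (by rw [hs]; ring)⟩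

/-- Multiplying `p` by `c ^ deg p` makes it a polynomial in `c X`, which is congruent modulo
`c X - F` to its value at `F`. -/
theorem C_mul_X_sub_C_dvd_of_eval₂_eq_zero {g : S →+* T} (hg : Function.Injective g)
    (hc : c ≠ 0) (hF : ∀ b, c ∣ F * b → c ∣ b) {z : T} (hz : g c * z = g F) {p : S[X]}
    (hp : p.eval₂ g z = 0) : C c * X - C F ∣ p := by
  have hroot : (p.scaleRoots c).eval F = 0 := by
    apply hg
    rw [map_zero, ← eval₂_at_apply, ← hz, scaleRoots_eval₂_mul, hp, mul_zero]
  have hdvd : C c * X - C F ∣ C c ^ p.natDegree * p := by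
    have h := sub_dvd_eval_sub (C c * X) (C F) ((p.scaleRoots c).map C)
    rwa [eval_map, eval_map, scaleRoots_eval₂_mul, eval₂_C_X, eval₂_at_apply, hroot, C_0,
      sub_zero] at h
  generalize p.natDegree = n at hdvd
  induction n with
  | zero => simpa using hdvd
  | succ n ih =>
    rw [pow_succ', mul_assoc] at hdvd
    exact ih (C_mul_X_sub_C_dvd_of_dvd_C_mul hc hF hdvd)

end LinearRelation

section ColonFlat

variable {R S : Type*} [CommRing R] [CommRing S] {f : R →+* S}

/-- A ring homomorphism for which the formation of colon ideals `(J : a)` commutes with extension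
of ideals; between Noetherian rings this is equivalent to flatness, and it is the only consequence
of flatness that is needed. The inclusion stated here is the nontrivial one. -/
def IsColonFlat (f : R →+* S) : Prop :=
  ∀ (J : Ideal R) (a : R) (b : S), f a * b ∈ J.map f → b ∈ (J.colon {a}).map f

/-- An element that is a nonzerodivisor modulo every ideal extended from the base: the quotient by
it stays flat over the base. -/
def IsRelativelyRegular (f : R →+* S) (F : S) : Prop :=
  ∀ (J : Ideal R) (b : S), F * b ∈ J.map f → b ∈ J.map f

theorem isColonFlat_id : IsColonFlat (RingHom.id R) := fun J a b hb ↦ by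
  rw [Ideal.map_id] at hb ⊢
  rwa [Submodule.mem_colon_singleton, smul_eq_mul, mul_comm]

theorem mul_mem_map_of_mem_map_colon {J : Ideal R} {a : R} {x : S}
    (hx : x ∈ (J.colon {a}).map f) : f a * x ∈ J.map f := by
  have hle : (J.colon {a}).map f ≤ (J.map f).colon {f a} := by
    refine Ideal.map_le_iff_le_comap.2 fun r hr ↦ ?_
    rw [Submodule.mem_colon_singleton, smul_eq_mul] at hr
    rw [Ideal.mem_comap, Submodule.mem_colon_singleton, smul_eq_mul, ← map_mul]
    exact Ideal.mem_map_of_mem f hr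
  have hxa := hle hx
  rwa [Submodule.mem_colon_singleton, smul_eq_mul, mul_comm] at hxa

theorem IsColonFlat.exists_eq_add_mul (hf : IsColonFlat f) {F : S} {J : Ideal R} {a : R}
    (hJ : ∀ b, F * b ∈ (J ⊔ Ideal.span {a}).map f → b ∈ (J ⊔ Ideal.span {a}).map f) {b : S}
    (hb : F * b ∈ J.map f) :
    ∃ j ∈ J.map f, ∃ b', b = j + f a * b' ∧ F * b' ∈ (J.colon {a}).map f := by
  have hmem := hJ b (Ideal.map_mono le_sup_left hb)
  rw [Ideal.map_sup, Ideal.map_span, Set.image_singleton, Submodule.mem_sup] at hmem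
  obtain ⟨j, hj, y, hy, rfl⟩ := hmem
  obtain ⟨b', rfl⟩ := Ideal.mem_span_singleton.1 hy
  refine ⟨j, hj, b', rfl, hf J a _ ?_⟩
  rw [show f a * (F * b') = F * (j + f a * b') - F * j by ring]
  exact sub_mem hb (Ideal.mul_mem_left _ F hj)

variable [IsLocalRing R] [IsNoetherianRing S] [IsLocalRing S] [IsLocalHom f]

/-- If multiplying by some `a` in the maximal ideal does not enlarge `J`, then
`b ↦ (b - j) / a` preserves the obstruction `(JS : F)`, so Nakayama's lemma applies. -/
theorem IsColonFlat.mem_map_of_mul_mem_of_colon_le (hf : IsColonFlat f) {F : S} {J : Ideal R}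
    {a : R} (ha : a ∈ IsLocalRing.maximalIdeal R) (haJ : J.colon {a} ≤ J)
    (hJ : ∀ b, F * b ∈ (J ⊔ Ideal.span {a}).map f → b ∈ (J ⊔ Ideal.span {a}).map f) {b : S}
    (hb : F * b ∈ J.map f) : b ∈ J.map f := by
  have hmem (x : S) : x ∈ (J.map f).colon {F} ↔ F * x ∈ J.map f := by
    rw [Submodule.mem_colon_singleton, smul_eq_mul, mul_comm]
  suffices (J.map f).colon {F} ≤ J.map f from this ((hmem b).2 hb)
  refine Submodule.le_of_le_smul_of_le_jacobson_bot (I := Ideal.span {f a})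
    (IsNoetherian.noetherian _) ?_ fun x hx ↦ ?_
  · rw [IsLocalRing.jacobson_eq_maximalIdeal _ bot_ne_top, Ideal.span_singleton_le_iff_mem,
      IsLocalRing.mem_maximalIdeal, mem_nonunits_iff, isUnit_map_iff]
    exact ha
  · obtain ⟨j, hj, b', rfl, hb'⟩ := hf.exists_eq_add_mul hJ ((hmem x).1 hx)
    exact Submodule.add_mem_sup hj (Submodule.smul_mem_smul (Ideal.mem_span_singleton_self _)
      ((hmem b').2 (Ideal.map_mono haJ hb')))

theorem IsColonFlat.isRelativelyRegular [IsNoetherianRing R] (hf : IsColonFlat f) {F : S}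
    (hF : ∀ b, F * b ∈ (IsLocalRing.maximalIdeal R).map f →
      b ∈ (IsLocalRing.maximalIdeal R).map f) : IsRelativelyRegular f F := by
  intro J
  induction J using WellFoundedGT.induction with
  | _ J ih =>
  by_cases hJ : J = ⊤
  · simp [hJ, Ideal.map_top]
  by_cases hJm : J = IsLocalRing.maximalIdeal R
  · rwa [hJm]
  have hsup {a : R} (ha : a ∉ J) := ih _ (left_lt_sup.2 fun h ↦
    ha (h (Ideal.mem_span_singleton_self a)))
  intro b hb
  by_cases hcolon : ∃ a ∉ J, ¬ J.colon {a} ≤ J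
  · obtain ⟨a, ha, hJa⟩ := hcolon
    have hlt : J < J.colon {a} := lt_of_le_not_ge
      (fun x hx ↦ Submodule.mem_colon_singleton.2 (Ideal.mul_mem_right _ _ hx)) hJa
    obtain ⟨j, hj, b', rfl, hb'⟩ := hf.exists_eq_add_mul (hsup ha) hb
    exact add_mem hj (mul_mem_map_of_mem_map_colon (ih _ hlt b' hb'))
  · push Not at hcolon
    obtain ⟨a, ham, ha⟩ := SetLike.exists_of_lt
      (lt_of_le_of_ne (IsLocalRing.le_maximalIdeal hJ) hJm)
    exact hf.mem_map_of_mul_mem_of_colon_le ham (hcolon a ha) (hsup ha) hb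

end ColonFlat

section LocalizedAdjoinRoot

variable {R S T : Type*} [CommRing R] [CommRing S] [CommRing T] {f : R →+* S} {g : S →+* T}
  {z : T} {ρ : S[X]}

/-- `T` is a localization of `S[X] / (ρ)`, with `X` mapping to `z`. -/
structure IsLocalizedAdjoinRoot (g : S →+* T) (z : T) (ρ : S[X]) : Prop where
  exists_eq : ∀ x, ∃ p q : S[X], IsUnit (q.eval₂ g z) ∧ q.eval₂ g z * x = p.eval₂ g z
  eval₂_eq_zero : ρ.eval₂ g z = 0
  dvd : ∀ p : S[X], p.eval₂ g z = 0 → ρ ∣ p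

namespace IsLocalizedAdjoinRoot

variable (h : IsLocalizedAdjoinRoot g z ρ)
include h

theorem exists_mul_eq_eval₂_of_mem_map {I : Ideal S} {x : T} (hx : x ∈ I.map g) :
    ∃ q : S[X], IsUnit (q.eval₂ g z) ∧ ∃ r ∈ I.map C, q.eval₂ g z * x = r.eval₂ g z := by
  induction hx using Submodule.span_induction with
  | mem x hx =>
    obtain ⟨j, hj, rfl⟩ := hx
    exact ⟨1, by simp, C j, Ideal.mem_map_of_mem _ hj, by simp⟩
  | zero => exact ⟨1, by simp, 0, zero_mem _, by simp⟩
  | add x y _ _ hx hy =>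
    obtain ⟨q, hq, r, hr, hqr⟩ := hx
    obtain ⟨q', hq', r', hr', hqr'⟩ := hy
    refine ⟨q * q', by rw [eval₂_mul]; exact hq.mul hq', q' * r + q * r',
      add_mem (Ideal.mul_mem_left _ _ hr) (Ideal.mul_mem_left _ _ hr'), ?_⟩
    simp only [eval₂_mul, eval₂_add, ← hqr, ← hqr']
    ring
  | smul a x _ hx =>
    obtain ⟨q, hq, r, hr, hqr⟩ := hx
    obtain ⟨p', q', hq', hpq'⟩ := h.exists_eq a
    refine ⟨q * q', by rw [eval₂_mul]; exact hq.mul hq', p' * r, Ideal.mul_mem_left _ _ hr, ?_⟩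
    simp only [eval₂_mul, ← hqr, ← hpq', smul_eq_mul]
    ring

theorem mem_map_iff {I : Ideal S} {p q : S[X]} {x : T} (hq : IsUnit (q.eval₂ g z))
    (hx : q.eval₂ g z * x = p.eval₂ g z) :
    x ∈ I.map g ↔ ∃ q' : S[X], IsUnit (q'.eval₂ g z) ∧ q' * p ∈ I.map C ⊔ Ideal.span {ρ} := by
  rw [← Ideal.unit_mul_mem_iff_mem _ hq, hx]
  constructor
  · intro hp
    obtain ⟨q', hq', r, hr, hqr⟩ := h.exists_mul_eq_eval₂_of_mem_map hp
    have hρ : ρ ∣ q' * p - r := h.dvd _ (by rw [eval₂_sub, eval₂_mul, hqr, sub_self])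
    rw [← Ideal.mem_span_singleton] at hρ
    exact ⟨q', hq', (Submodule.sub_mem_iff_left _ (Ideal.mem_sup_left hr)).1
      (Ideal.mem_sup_right hρ)⟩
  · rintro ⟨q', hq', hmem⟩
    have hle : I.map C ⊔ Ideal.span {ρ} ≤ (I.map g).comap (eval₂RingHom g z) := by
      refine sup_le (Ideal.map_le_iff_le_comap.2 fun i hi ↦ ?_) ?_
      · simpa using Ideal.mem_map_of_mem g hi
      · rw [Ideal.span_singleton_le_iff_mem]
        simp [h.eval₂_eq_zero]
    have hp := hle hmem
    rwa [Ideal.mem_comap, coe_eval₂RingHom, eval₂_mul, Ideal.unit_mul_mem_iff_mem _ hq'] at hp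

end IsLocalizedAdjoinRoot

theorem IsColonFlat.mem_map_C_sup_span_of_C_mul_mem (hf : IsColonFlat f)
    (hρ : ∀ J : Ideal R, Ideal.span {ρ} ⊓ (J.map f).map C ≤ Ideal.span {ρ} * (J.map f).map C)
    {J : Ideal R} {a : R} {p : S[X]} (hp : C (f a) * p ∈ (J.map f).map C ⊔ Ideal.span {ρ}) :
    p ∈ ((J.colon {a}).map f).map C ⊔ Ideal.span {ρ} := by
  obtain ⟨j, hj, y, hy, hsum⟩ := Submodule.mem_sup.1 hp
  have hyJ : y ∈ ((J ⊔ Ideal.span {a}).map f).map C := by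
    rw [eq_sub_of_add_eq' hsum]
    exact sub_mem (Ideal.mul_mem_right _ _ (Ideal.mem_map_of_mem _ (Ideal.mem_map_of_mem _
      (Ideal.mem_sup_right (Ideal.mem_span_singleton_self a)))))
      (Ideal.map_mono (Ideal.map_mono le_sup_left) hj)
  obtain ⟨s, hs, rfl⟩ := Ideal.mem_span_singleton_mul.1 (hρ _ ⟨hy, hyJ⟩)
  simp only [Ideal.map_sup, Ideal.map_span, Set.image_singleton] at hs
  obtain ⟨j', hj', w, hw, rfl⟩ := Submodule.mem_sup.1 hs
  obtain ⟨t, rfl⟩ := Ideal.mem_span_singleton.1 hw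
  have ht : p - ρ * t ∈ ((J.colon {a}).map f).map C := by
    have hmem : C (f a) * (p - ρ * t) ∈ (J.map f).map C := by
      rw [show C (f a) * (p - ρ * t) = j + ρ * j' by linear_combination -hsum]
      exact add_mem hj (Ideal.mul_mem_left _ _ hj')
    rw [Ideal.mem_map_C_iff] at hmem ⊢
    exact fun n ↦ hf J a _ (by simpa only [coeff_C_mul] using hmem n)
  rw [← sub_add_cancel p (ρ * t)]
  exact add_mem (Ideal.mem_sup_left ht)
    (Ideal.mem_sup_right (Ideal.mul_mem_right _ _ (Ideal.mem_span_singleton_self _)))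

theorem IsLocalizedAdjoinRoot.isColonFlat (h : IsLocalizedAdjoinRoot g z ρ) (hf : IsColonFlat f)
    (hρ : ∀ J : Ideal R, Ideal.span {ρ} ⊓ (J.map f).map C ≤ Ideal.span {ρ} * (J.map f).map C) :
    IsColonFlat (g.comp f) := by
  intro J a x hx
  obtain ⟨p, q, hq, hqx⟩ := h.exists_eq x
  have hqax : q.eval₂ g z * (g (f a) * x) = (C (f a) * p).eval₂ g z := by
    rw [eval₂_mul, eval₂_C, ← hqx, mul_left_comm]
  rw [RingHom.comp_apply, ← Ideal.map_map, h.mem_map_iff hq hqax] at hx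
  rw [← Ideal.map_map, h.mem_map_iff hq hqx]
  obtain ⟨q', hq', hmem⟩ := hx
  exact ⟨q', hq', hf.mem_map_C_sup_span_of_C_mul_mem hρ (by rwa [mul_left_comm])⟩

theorem IsLocalizedAdjoinRoot.mem_map_of_eval₂_mul_mem (h : IsLocalizedAdjoinRoot g z ρ)
    {I I' : Ideal S} (hI : I.map C ⊔ Ideal.span {ρ} = I'.map C) {H : S[X]} {n : ℕ}
    (hH : IsUnit (H.coeff n)) {x : T} (hx : H.eval₂ g z * x ∈ I.map g) : x ∈ I.map g := by
  obtain ⟨p, q, hq, hqx⟩ := h.exists_eq x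
  have hqHx : q.eval₂ g z * (H.eval₂ g z * x) = (H * p).eval₂ g z := by
    rw [eval₂_mul, ← hqx, mul_left_comm]
  rw [h.mem_map_iff hq hqHx] at hx
  rw [h.mem_map_iff hq hqx]
  obtain ⟨q', hq', hmem⟩ := hx
  rw [hI, mul_left_comm] at hmem
  exact ⟨q', hq', hI ▸ mem_map_C_of_mul_mem hH hmem⟩

end LocalizedAdjoinRoot

section AdjoinElem

variable {k Λ : Type*} [CommRing k] [CommRing Λ] [Algebra k Λ] {A B : Subalgebra k Λ} {z : Λ}

/-- The subalgebra `A[z]`. -/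
def adjoinElem (A : Subalgebra k Λ) (z : Λ) : Subalgebra k Λ :=
  (Algebra.adjoin A {z}).restrictScalars k

theorem mem_adjoinElem_iff {x : Λ} : x ∈ adjoinElem A z ↔ ∃ p : A[X], aeval z p = x := by
  rw [adjoinElem, Subalgebra.mem_restrictScalars, adjoin_singleton_eq_range_aeval]
  rfl

theorem le_adjoinElem (A : Subalgebra k Λ) (z : Λ) : A ≤ adjoinElem A z :=
  fun x hx ↦ algebraMap_mem (Algebra.adjoin A {z}) ⟨x, hx⟩

theorem self_mem_adjoinElem (A : Subalgebra k Λ) (z : Λ) : z ∈ adjoinElem A z :=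
  self_mem_adjoin_singleton A z

theorem adjoinElem_le (h : A ≤ B) (hz : z ∈ B) : adjoinElem A z ≤ B := by
  intro x hx
  obtain ⟨p, rfl⟩ := mem_adjoinElem_iff.1 hx
  rw [aeval_eq_sum_range]
  exact sum_mem fun i _ ↦ mul_mem (h (p.coeff i).2) (pow_mem hz i)

theorem coe_eval₂_inclusion (h : A ≤ B) (z : B) (p : A[X]) :
    ((p.eval₂ (inclusion h).toRingHom z : B) : Λ) = aeval (z : Λ) p :=
  hom_eval₂ p (inclusion h).toRingHom B.val.toRingHom z

end AdjoinElem

section CompleteIntersection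

variable {k Λ : Type*} [Field k] [CommRing Λ] [Algebra k Λ] {A : Subalgebra k Λ}

theorem isCompleteIntersection_adjoinElem_of_ker_eq {z : Λ} {I : Ideal A[X]}
    (hker : RingHom.ker (aeval z : A[X] →ₐ[A] Λ) = I)
    (hI : IsCompleteIntersectionOfFiniteType k (A[X] ⧸ I)) :
    IsCompleteIntersectionOfFiniteType k (adjoinElem A z) := by
  have hrange : ((aeval z : A[X] →ₐ[A] Λ).restrictScalars k).range = adjoinElem A z := by
    ext x
    rw [mem_adjoinElem_iff]
    rfl
  exact hI.of_algEquiv (((Ideal.quotientEquivAlgOfEq k hker.symm).trans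
    (Ideal.quotientKerEquivRange ((aeval z : A[X] →ₐ[A] Λ).restrictScalars k))).trans
    (Subalgebra.equivOfEq _ _ hrange))

theorem isCompleteIntersection_adjoinElem_of_mul_eq [IsDomain Λ]
    (hA : IsCompleteIntersectionOfFiniteType k A) {c F : A} (hc : c ≠ 0)
    (hF : ∀ b, c ∣ F * b → c ∣ b) {z : Λ} (hz : c * z = F) :
    IsCompleteIntersectionOfFiniteType k (adjoinElem A z) := by
  have hdeg : (C c * X - C F : A[X]).degree = 1 := by
    rw [sub_eq_add_neg, ← C_neg]
    exact degree_linear hc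
  refine isCompleteIntersection_adjoinElem_of_ker_eq (I := Ideal.span {C c * X - C F}) ?_
    (hA.polynomial.quotient_span_singleton (fun h ↦ by simp [h] at hdeg)
      fun h ↦ by simp [degree_eq_zero_of_isUnit h] at hdeg)
  refine le_antisymm (fun p hp ↦ Ideal.mem_span_singleton.2 ?_) ?_
  · exact C_mul_X_sub_C_dvd_of_eval₂_eq_zero (g := algebraMap A Λ) Subtype.val_injective hc hF hz hp
  · rw [Ideal.span_singleton_le_iff_mem, RingHom.mem_ker]
    simp only [map_sub, map_mul, aeval_C, aeval_X]
    exact sub_eq_zero.2 hz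

theorem isCompleteIntersection_adjoinElem_of_injective
    (hA : IsCompleteIntersectionOfFiniteType k A) {z : Λ}
    (hz : Function.Injective (aeval z : A[X] →ₐ[A] Λ)) :
    IsCompleteIntersectionOfFiniteType k (adjoinElem A z) :=
  isCompleteIntersection_adjoinElem_of_ker_eq
    ((RingHom.injective_iff_ker_eq_bot (aeval z : A[X] →ₐ[A] Λ)).1 hz)
    (hA.polynomial.of_algEquiv (AlgEquiv.quotientBot k A[X]).symm)

end CompleteIntersection

section LocalizationAt

variable {k Λ : Type*} [CommRing k] [CommRing Λ] [Algebra k Λ] {A B : Subalgebra k Λ}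
  {S : Submonoid Λ}

/-- The elements of `Λ` which are fractions `a / b` with `a, b ∈ A` and `b ∈ S`; the elements of
`S` are only required to act as denominators, so this is the localization `A[(A ∩ S)⁻¹]` when they
are units of `Λ`. -/
def localizationAt (S : Submonoid Λ) (A : Subalgebra k Λ) : Subalgebra k Λ where
  carrier := {x | ∃ b ∈ A, b ∈ S ∧ b * x ∈ A}
  mul_mem' := by
    rintro x y ⟨b, hb, hbS, hbx⟩ ⟨d, hd, hdS, hdy⟩
    refine ⟨b * d, mul_mem hb hd, mul_mem hbS hdS, ?_⟩
    rw [mul_mul_mul_comm]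
    exact mul_mem hbx hdy
  add_mem' := by
    rintro x y ⟨b, hb, hbS, hbx⟩ ⟨d, hd, hdS, hdy⟩
    refine ⟨b * d, mul_mem hb hd, mul_mem hbS hdS, ?_⟩
    rw [show b * d * (x + y) = d * (b * x) + b * (d * y) by ring]
    exact add_mem (mul_mem hd hbx) (mul_mem hb hdy)
  algebraMap_mem' r := ⟨1, one_mem _, one_mem _, by simp⟩

theorem le_localizationAt (S : Submonoid Λ) (A : Subalgebra k Λ) : A ≤ localizationAt S A :=
  fun x hx ↦ ⟨1, one_mem _, one_mem _, by simpa⟩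

theorem localizationAt_mono (h : A ≤ B) : localizationAt S A ≤ localizationAt S B :=
  fun _ ⟨b, hb, hbS, hbx⟩ ↦ ⟨b, h hb, hbS, h hbx⟩

theorem mem_localizationAt_of_mul_mem {b x : Λ} (hb : b ∈ localizationAt S A) (hbS : b ∈ S)
    (hbx : b * x ∈ localizationAt S A) : x ∈ localizationAt S A := by
  obtain ⟨d, hd, hdS, hdb⟩ := hb
  obtain ⟨e, he, heS, heb⟩ := hbx
  refine ⟨e * (d * b), mul_mem he hdb, mul_mem heS (mul_mem hdS hbS), ?_⟩
  rw [show e * (d * b) * x = d * (e * (b * x)) by ring]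
  exact mul_mem hd heb

theorem localizationAt_le_localizationAt_of_le (h : A ≤ localizationAt S B) :
    localizationAt S A ≤ localizationAt S B :=
  fun _ ⟨_, hb, hbS, hbx⟩ ↦ mem_localizationAt_of_mul_mem (h hb) hbS (h hbx)

theorem exists_pow_mul_mem_of_mem_adjoinElem {b b' x : Λ} (hb : b ∈ A) (hbb' : b * b' = 1)
    (hx : x ∈ adjoinElem A b') : ∃ n : ℕ, b ^ n * x ∈ A := by
  have hb' : b' ∈ localizationAt (Submonoid.powers b) A :=
    ⟨b, hb, Submonoid.mem_powers b, by rw [hbb']; exact one_mem A⟩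
  obtain ⟨_, -, ⟨n, rfl⟩, hn⟩ := adjoinElem_le (le_localizationAt (Submonoid.powers b) A) hb' hx
  exact ⟨n, hn⟩

end LocalizationAt

section LocalCompleteIntersection

variable {k Λ M : Type*} [Field k] [CommRing Λ] [Algebra k Λ] [LinearOrderedCommGroupWithZero M]
  {v : Valuation Λ M} {O A R : Subalgebra k Λ} {z : Λ}

/-- The localization of `A` at the centre of `v`, i.e. at the elements of valuation `1`. -/
def valLoc (v : Valuation Λ M) (A : Subalgebra k Λ) : Subalgebra k Λ :=
  localizationAt (MonoidHom.mker v) A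

theorem mem_valLoc_iff {x : Λ} : x ∈ valLoc v A ↔ ∃ b ∈ A, v b = 1 ∧ b * x ∈ A :=
  Iff.rfl

/-- `A` is a complete intersection `k`-algebra, and `O` is its localization at the centre of
`v`. -/
structure IsCompleteIntersectionModel (v : Valuation Λ M) (O A : Subalgebra k Λ) : Prop where
  le : A ≤ O
  isCompleteIntersection : IsCompleteIntersectionOfFiniteType k A
  le_valLoc : O ≤ valLoc v A

/-- `O` is a local ring dominated by the valuation ring of `v`, and is the localization of a
complete intersection `k`-algebra of finite type. -/
structure IsLocalCompleteIntersection (v : Valuation Λ M) (O : Subalgebra k Λ) : Prop where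
  le_one : ∀ a ∈ O, v a ≤ 1
  exists_inv : ∀ a ∈ O, v a = 1 → ∃ b ∈ O, a * b = 1
  exists_model : ∃ A, IsCompleteIntersectionModel v O A

theorem isLocalCompleteIntersection_valLoc (hv : ∀ a, v a ≠ 0 → IsUnit a) (hA : ∀ a ∈ A, v a ≤ 1)
    (h : IsCompleteIntersectionOfFiniteType k A) : IsLocalCompleteIntersection v (valLoc v A) := by
  refine ⟨?_, ?_, A, le_localizationAt _ A, h, le_rfl⟩
  · rintro a ⟨b, _, hvb, hba⟩
    simpa [MonoidHom.mem_mker.1 hvb] using hA _ hba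
  · rintro a ⟨b, hb, hvb, hba⟩ hva
    obtain ⟨a', haa'⟩ := (hv a (by simp [hva])).exists_right_inv
    refine ⟨a', ⟨b * a, hba, by simp [MonoidHom.mem_mker.1 hvb, hva], ?_⟩, haa'⟩
    rwa [mul_assoc, haa', mul_one]

namespace IsLocalCompleteIntersection

variable (hO : IsLocalCompleteIntersection v O)
include hO

theorem isUnit_iff (a : O) : IsUnit a ↔ v a = 1 := by
  constructor
  · intro h
    obtain ⟨b, hb⟩ := h.exists_right_inv
    have hab : v a * v b = 1 := by rw [← map_mul, ← MulMemClass.coe_mul, hb]; simp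
    refine le_antisymm (hO.le_one _ a.2) ?_
    rw [← hab]
    exact mul_le_of_le_one_right' (hO.le_one _ b.2)
  · intro h
    obtain ⟨b, hb, hab⟩ := hO.exists_inv _ a.2 h
    exact IsUnit.of_mul_eq_one ⟨b, hb⟩ (Subtype.ext hab)

theorem isLocalRing : IsLocalRing O := by
  have : Nontrivial O := ⟨0, 1, fun h ↦ by simpa using congrArg (fun x : O ↦ v x) h⟩
  refine IsLocalRing.of_nonunits_add fun a b ha hb ↦ ?_
  rw [mem_nonunits_iff, hO.isUnit_iff] at *
  exact (v.map_add_lt (lt_of_le_of_ne (hO.le_one _ a.2) ha)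
    (lt_of_le_of_ne (hO.le_one _ b.2) hb)).ne

theorem isLocalHom_inclusion (hR : IsLocalCompleteIntersection v R) (h : R ≤ O) :
    IsLocalHom (inclusion h).toRingHom :=
  ⟨fun a ha ↦ (hR.isUnit_iff a).2 ((hO.isUnit_iff _).1 ha)⟩

theorem isNoetherianRing : IsNoetherianRing O := by
  obtain ⟨A, hA⟩ := hO.exists_model
  have := hA.isCompleteIntersection.finiteType
  have hN : IsNoetherianRing A := Algebra.FiniteType.isNoetherianRing k A
  rw [isNoetherianRing_iff_ideal_fg] at hN ⊢
  intro I
  suffices I = (I.comap (inclusion hA.le).toRingHom).map (inclusion hA.le).toRingHom by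
    rw [this]
    exact (hN _).map _
  refine le_antisymm (fun x hx ↦ ?_) Ideal.map_comap_le
  obtain ⟨b, hb, hvb, hbx⟩ := hA.le_valLoc x.2
  have hu : IsUnit (inclusion hA.le ⟨b, hb⟩) := (hO.isUnit_iff _).2 hvb
  rw [← Ideal.unit_mul_mem_iff_mem _ hu]
  exact Ideal.mem_map_of_mem (inclusion hA.le).toRingHom (x := ⟨b * x, hbx⟩)
    (Ideal.mul_mem_left I (inclusion hA.le ⟨b, hb⟩) hx)

theorem adjoinElem_le_one (hz : v z ≤ 1) {a : Λ} (ha : a ∈ adjoinElem O z) : v a ≤ 1 := by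
  obtain ⟨p, rfl⟩ := mem_adjoinElem_iff.1 ha
  rw [aeval_eq_sum_range]
  refine v.map_sum_le fun i _ ↦ ?_
  rw [Algebra.smul_def, map_mul, map_pow]
  exact mul_le_one' (hO.le_one _ (p.coeff i).2) (pow_le_one' hz i)

end IsLocalCompleteIntersection

namespace IsCompleteIntersectionModel

theorem exists_common_denominator (hA : IsCompleteIntersectionModel v O A) {D : Set Λ}
    (hD : D.Finite) (hDO : D ⊆ O) : ∃ b ∈ A, v b = 1 ∧ ∀ d ∈ D, b * d ∈ A := by
  induction D, hD using Set.Finite.induction_on with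
  | empty => exact ⟨1, one_mem A, map_one v, by simp⟩
  | @insert d D _ _ ih =>
    obtain ⟨b, hb, hvb, hbD⟩ := ih ((Set.subset_insert _ _).trans hDO)
    obtain ⟨e, he, hve, hed⟩ := mem_valLoc_iff.1 (hA.le_valLoc (hDO (Set.mem_insert d D)))
    refine ⟨b * e, mul_mem hb he, by rw [map_mul, hvb, hve, one_mul], ?_⟩
    rintro x (rfl | hx)
    · rw [mul_assoc]
      exact mul_mem hb hed
    · rw [mul_comm b, mul_assoc]
      exact mul_mem he (hbD x hx)

theorem adjoin_inv [IsDomain Λ] (hA : IsCompleteIntersectionModel v O A) {b b' : Λ} (hb : b ∈ A)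
    (hb' : b' ∈ O) (hbb' : b * b' = 1) : IsCompleteIntersectionModel v O (adjoinElem A b') := by
  refine ⟨adjoinElem_le hA.le hb', ?_, hA.le_valLoc.trans
    (localizationAt_mono (le_adjoinElem A b'))⟩
  refine isCompleteIntersection_adjoinElem_of_mul_eq hA.isCompleteIntersection (c := ⟨b, hb⟩)
    (F := 1) (fun h ↦ left_ne_zero_of_mul_eq_one hbb' (congrArg Subtype.val h)) (by simp) hbb'

theorem exists_adjoin_inv [IsDomain Λ] (hA : IsCompleteIntersectionModel v O A)
    (hO : IsLocalCompleteIntersection v O) {D : Set Λ} (hD : D.Finite) (hDO : D ⊆ O) :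
    ∃ b ∈ A, ∃ b', b * b' = 1 ∧ IsCompleteIntersectionModel v O (adjoinElem A b') ∧
      D ⊆ adjoinElem A b' := by
  obtain ⟨b, hb, hvb, hbD⟩ := hA.exists_common_denominator hD hDO
  obtain ⟨b', hb', hbb'⟩ := hO.exists_inv b (hA.le hb) hvb
  refine ⟨b, hb, b', hbb', hA.adjoin_inv hb hb' hbb', fun d hd ↦ ?_⟩
  rw [show d = b' * (b * d) by rw [← mul_assoc, mul_comm b', hbb', one_mul]]
  exact mul_mem (self_mem_adjoinElem A b') (le_adjoinElem A b' (hbD d hd))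

theorem valLoc_adjoinElem (hA : IsCompleteIntersectionModel v O A) (z : Λ) :
    valLoc v (adjoinElem O z) = valLoc v (adjoinElem A z) := by
  refine le_antisymm (localizationAt_le_localizationAt_of_le (adjoinElem_le ?_ ?_))
    (localizationAt_mono (adjoinElem_le (hA.le.trans (le_adjoinElem O z))
      (self_mem_adjoinElem O z)))
  · exact hA.le_valLoc.trans (localizationAt_mono (le_adjoinElem A z))
  · exact le_localizationAt _ _ (self_mem_adjoinElem A z)

end IsCompleteIntersectionModel

namespace IsLocalCompleteIntersection

theorem exists_model_superset [IsDomain Λ] (hO : IsLocalCompleteIntersection v O) {D : Set Λ}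
    (hD : D.Finite) (hDO : D ⊆ O) : ∃ A, IsCompleteIntersectionModel v O A ∧ D ⊆ A := by
  obtain ⟨A, hA⟩ := hO.exists_model
  obtain ⟨b, -, b', -, hA', hDA'⟩ := hA.exists_adjoin_inv hO hD hDO
  exact ⟨_, hA', hDA'⟩

/-- The model is obtained by adjoining the quotients by `d` of finitely many generators of `𝔞`. -/
theorem exists_model_of_le_span_singleton [IsDomain Λ] (hO : IsLocalCompleteIntersection v O)
    {D : Set Λ} (hD : D.Finite) (hDO : D ⊆ O) {𝔞 : Ideal O} {d : O} (h𝔞 : 𝔞 ≤ Ideal.span {d}) :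
    ∃ A, IsCompleteIntersectionModel v O A ∧ D ⊆ A ∧
      ∀ x ∈ 𝔞, (x : Λ) ∈ A → ∃ t ∈ A, (d : Λ) * t = x := by
  obtain ⟨A, hA, hDA⟩ := hO.exists_model_superset hD hDO
  have := hA.isCompleteIntersection.finiteType
  have hN : IsNoetherianRing A := Algebra.FiniteType.isNoetherianRing k A
  obtain ⟨G, hG⟩ := (isNoetherianRing_iff_ideal_fg A).1 hN (𝔞.comap (inclusion hA.le).toRingHom)
  have hdiv : ∀ g ∈ G, ∃ t : O, (d : Λ) * t = g := fun g hg ↦ by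
    have hg𝔞 : g ∈ 𝔞.comap (inclusion hA.le).toRingHom := hG ▸ Submodule.subset_span hg
    obtain ⟨t, ht⟩ := Ideal.mem_span_singleton.1 (h𝔞 hg𝔞)
    exact ⟨t, (congrArg Subtype.val ht).symm⟩
  choose! t ht using hdiv
  obtain ⟨b, hb, b', hbb', hA', htA'⟩ := hA.exists_adjoin_inv hO (D := (fun g ↦ (t g : Λ)) '' G)
    (G.finite_toSet.image _) (by rintro _ ⟨g, -, rfl⟩; exact (t g).2)
  refine ⟨_, hA', hDA.trans (le_adjoinElem A b'), fun x hx hxA' ↦ ?_⟩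
  have hspan : ∀ g ∈ Ideal.span (G : Set A), ∃ t ∈ adjoinElem A b', (d : Λ) * t = g := by
    intro g hg
    induction hg using Submodule.span_induction with
    | mem g hg => exact ⟨t g, htA' ⟨g, hg, rfl⟩, ht g hg⟩
    | zero => exact ⟨0, zero_mem _, by simp⟩
    | add x y _ _ hx hy =>
      obtain ⟨s, hs, hsx⟩ := hx
      obtain ⟨t, ht, hty⟩ := hy
      exact ⟨s + t, add_mem hs ht, by rw [mul_add, hsx, hty]; rfl⟩
    | smul a x _ hx =>
      obtain ⟨s, hs, hsx⟩ := hx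
      exact ⟨a * s, mul_mem (le_adjoinElem A b' a.2) hs, by rw [mul_left_comm, hsx]; rfl⟩
  obtain ⟨n, hn⟩ := exists_pow_mul_mem_of_mem_adjoinElem hb hbb' hxA'
  obtain ⟨s, hs, hsx⟩ := hspan ⟨b ^ n * x, hn⟩ (hG ▸ Ideal.mul_mem_left 𝔞
    ((inclusion hA.le) ⟨b, hb⟩ ^ n) hx)
  refine ⟨b' ^ n * s, mul_mem (pow_mem (self_mem_adjoinElem A b') n) hs, ?_⟩
  rw [mul_left_comm, hsx, ← mul_assoc, ← mul_pow, mul_comm b', hbb', one_pow, one_mul]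

end IsLocalCompleteIntersection

/-- The localization of `O[z]` at the centre of `v`. -/
def localAdjoin (v : Valuation Λ M) (O : Subalgebra k Λ) (z : Λ) : Subalgebra k Λ :=
  valLoc v (adjoinElem O z)

theorem le_localAdjoin (v : Valuation Λ M) (O : Subalgebra k Λ) (z : Λ) : O ≤ localAdjoin v O z :=
  (le_adjoinElem O z).trans (le_localizationAt _ _)

theorem self_mem_localAdjoin (v : Valuation Λ M) (O : Subalgebra k Λ) (z : Λ) :
    z ∈ localAdjoin v O z :=
  le_localizationAt _ _ (self_mem_adjoinElem O z)

theorem IsCompleteIntersectionModel.isLocalCompleteIntersection_localAdjoin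
    (hA : IsCompleteIntersectionModel v O A) (hv : ∀ a, v a ≠ 0 → IsUnit a)
    (hO : IsLocalCompleteIntersection v O) (hvz : v z ≤ 1)
    (hAz : IsCompleteIntersectionOfFiniteType k (adjoinElem A z)) :
    IsLocalCompleteIntersection v (localAdjoin v O z) := by
  rw [localAdjoin, hA.valLoc_adjoinElem]
  refine isLocalCompleteIntersection_valLoc hv (fun a ha ↦ hO.adjoinElem_le_one hvz ?_) hAz
  exact adjoinElem_le (hA.le.trans (le_adjoinElem O z)) (self_mem_adjoinElem O z) ha

namespace IsLocalCompleteIntersection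

theorem localAdjoin_of_mul_eq [IsDomain Λ] (hv : ∀ a, v a ≠ 0 → IsUnit a)
    (hO : IsLocalCompleteIntersection v O) {c F : O} (hc : c ≠ 0) (hF : ∀ b, c ∣ F * b → c ∣ b)
    (hz : c * z = F) (hvz : v z ≤ 1) : IsLocalCompleteIntersection v (localAdjoin v O z) := by
  have hcolon (b : O) : b ∈ (Ideal.span {c}).colon {F} ↔ c ∣ F * b := by
    rw [Submodule.mem_colon_singleton, smul_eq_mul, mul_comm, Ideal.mem_span_singleton]
  obtain ⟨A, hA, hcFA, hdiv⟩ := hO.exists_model_of_le_span_singleton (D := {(c : Λ), (F : Λ)})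
    (by simp) (by simp [Set.insert_subset_iff]) (𝔞 := (Ideal.span {c}).colon {F}) (d := c)
    fun b hb ↦ Ideal.mem_span_singleton.2 (hF b ((hcolon b).1 hb))
  refine hA.isLocalCompleteIntersection_localAdjoin hv hO hvz
    (isCompleteIntersection_adjoinElem_of_mul_eq hA.isCompleteIntersection
      (c := ⟨c, hcFA (by simp)⟩) (F := ⟨F, hcFA (by simp)⟩)
      (fun h ↦ hc (Subtype.ext (congrArg (fun a : A ↦ (a : Λ)) h))) ?_ hz)
  rintro b ⟨e, he⟩
  have hb : inclusion hA.le b ∈ (Ideal.span {c}).colon {F} :=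
    (hcolon _).2 ⟨inclusion hA.le e, Subtype.ext (congrArg (fun a : A ↦ (a : Λ)) he)⟩
  obtain ⟨t, ht, hct⟩ := hdiv _ hb b.2
  exact ⟨⟨t, ht⟩, Subtype.ext hct.symm⟩

theorem localAdjoin_of_injective (hv : ∀ a, v a ≠ 0 → IsUnit a)
    (hO : IsLocalCompleteIntersection v O) (hz : Function.Injective (aeval z : O[X] →ₐ[O] Λ))
    (hvz : v z ≤ 1) : IsLocalCompleteIntersection v (localAdjoin v O z) := by
  obtain ⟨A, hA⟩ := hO.exists_model
  refine hA.isLocalCompleteIntersection_localAdjoin hv hO hvz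
    (isCompleteIntersection_adjoinElem_of_injective hA.isCompleteIntersection ?_)
  have hcomp : (aeval z : A[X] → Λ) =
      (aeval z : O[X] → Λ) ∘ Polynomial.map (inclusion hA.le).toRingHom := by
    ext p
    simp only [aeval_def, eval₂_map, Function.comp_apply]
    rfl
  rw [hcomp]
  exact hz.comp (Polynomial.map_injective _ (Subalgebra.inclusion_injective hA.le))

theorem isLocalizedAdjoinRoot (hO' : IsLocalCompleteIntersection v (localAdjoin v O z)) {ρ : O[X]}
    (hρ : aeval z ρ = 0) (hdvd : ∀ p : O[X], aeval z p = 0 → ρ ∣ p) :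
    IsLocalizedAdjoinRoot (inclusion (le_localAdjoin v O z)).toRingHom
      ⟨z, self_mem_localAdjoin v O z⟩ ρ := by
  refine ⟨fun x ↦ ?_, ?_, fun p hp ↦ hdvd p ?_⟩
  · obtain ⟨b, hb, hvb, hbx⟩ := mem_valLoc_iff.1 x.2
    obtain ⟨q, rfl⟩ := mem_adjoinElem_iff.1 hb
    obtain ⟨p, hp⟩ := mem_adjoinElem_iff.1 hbx
    refine ⟨p, q, (hO'.isUnit_iff _).2 (by rwa [coe_eval₂_inclusion]), Subtype.ext ?_⟩
    rw [MulMemClass.coe_mul, coe_eval₂_inclusion, coe_eval₂_inclusion, hp]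
  · exact Subtype.ext ((coe_eval₂_inclusion ..).trans hρ)
  · exact (coe_eval₂_inclusion _ ⟨z, self_mem_localAdjoin v O z⟩ p).symm.trans
      (congrArg Subtype.val hp)

end IsLocalCompleteIntersection

theorem IsLocalizedAdjoinRoot.isRelativelyRegular [IsLocalRing R] {ρ : O[X]} {h : R ≤ O}
    (hz : IsLocalizedAdjoinRoot (inclusion (le_localAdjoin v O z)).toRingHom
      ⟨z, self_mem_localAdjoin v O z⟩ ρ)
    (hR : IsLocalCompleteIntersection v R)
    (hO' : IsLocalCompleteIntersection v (localAdjoin v O z))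
    (hflat : IsColonFlat (inclusion (h.trans (le_localAdjoin v O z))).toRingHom)
    {I : Ideal O} (hI : ((IsLocalRing.maximalIdeal R).map (inclusion h).toRingHom).map C ⊔
      Ideal.span {ρ} = I.map C)
    {H : O[X]} {n : ℕ} (hH : IsUnit (H.coeff n)) {F : localAdjoin v O z} (hF : F = aeval z H) :
    IsRelativelyRegular (inclusion (h.trans (le_localAdjoin v O z))).toRingHom F := by
  have := hR.isNoetherianRing
  have := hO'.isNoetherianRing
  have := hO'.isLocalRing
  have := hO'.isLocalHom_inclusion hR (h.trans (le_localAdjoin v O z))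
  have hz' := self_mem_localAdjoin v O z
  obtain rfl : F = H.eval₂ (inclusion (le_localAdjoin v O z)).toRingHom ⟨z, hz'⟩ :=
    Subtype.ext (hF.trans (coe_eval₂_inclusion (le_localAdjoin v O z) ⟨z, hz'⟩ H).symm)
  refine hflat.isRelativelyRegular fun b hb ↦ ?_
  have hcomp : (inclusion (h.trans (le_localAdjoin v O z))).toRingHom =
      (inclusion (le_localAdjoin v O z)).toRingHom.comp (inclusion h).toRingHom := rfl
  rw [hcomp, ← Ideal.map_map] at hb ⊢
  exact hz.mem_map_of_eval₂_mul_mem hI hH hb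

section Map

variable {K : Type*} [CommRing K] [Algebra k K] {w : Valuation K M} {ψ : Λ →ₐ[k] K}

namespace IsLocalCompleteIntersection

theorem map_of_model (hO : IsLocalCompleteIntersection v O) (hψ : ∀ x, w (ψ x) = v x)
    (hA : IsCompleteIntersectionModel v O A)
    (h : IsCompleteIntersectionOfFiniteType k (A.map ψ)) :
    IsLocalCompleteIntersection w (O.map ψ) := by
  refine ⟨?_, ?_, A.map ψ, Subalgebra.map_mono hA.le, h, ?_⟩
  · rintro _ ⟨a, ha, rfl⟩
    exact (hψ a).trans_le (hO.le_one a ha)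
  · rintro _ ⟨a, ha, rfl⟩ hwa
    obtain ⟨b, hb, hab⟩ := hO.exists_inv a ha ((hψ a).symm.trans hwa)
    refine ⟨ψ b, ⟨b, hb, rfl⟩, ?_⟩
    rw [RingHom.coe_coe, ← map_mul, hab, map_one]
  · rintro _ ⟨a, ha, rfl⟩
    obtain ⟨b, hb, hvb, hba⟩ := mem_valLoc_iff.1 (hA.le_valLoc ha)
    exact mem_valLoc_iff.2
      ⟨ψ b, ⟨b, hb, rfl⟩, (hψ b).trans hvb, b * a, hba, map_mul ψ b a⟩

theorem map_of_injective (hO : IsLocalCompleteIntersection v O) (hψ : ∀ x, w (ψ x) = v x)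
    (hinj : Function.Injective ψ) : IsLocalCompleteIntersection w (O.map ψ) := by
  obtain ⟨A, hA⟩ := hO.exists_model
  exact hO.map_of_model hψ hA
    (hA.isCompleteIntersection.of_algEquiv (A.equivMapOfInjective ψ hinj))

theorem map_of_ker_eq_span [IsDomain Λ] [Nontrivial K] (hO : IsLocalCompleteIntersection v O)
    (hψ : ∀ x, w (ψ x) = v x) {F : O} (hF : F ≠ 0)
    (hker : RingHom.ker (ψ.comp O.val) = Ideal.span {F}) :
    IsLocalCompleteIntersection w (O.map ψ) := by
  have hψF : ψ F = 0 := hker.ge (Ideal.mem_span_singleton_self F)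
  obtain ⟨A, hA, hFA, hdiv⟩ := hO.exists_model_of_le_span_singleton (D := {(F : Λ)}) (by simp)
    (by simp) hker.le
  rw [Set.singleton_subset_iff] at hFA
  have hkerA : RingHom.ker (ψ.comp A.val) = Ideal.span {⟨F, hFA⟩} := by
    refine le_antisymm (fun x hx ↦ Ideal.mem_span_singleton.2 ?_)
      ((Ideal.span_singleton_le_iff_mem _).2 hψF)
    obtain ⟨t, ht, hFt⟩ := hdiv (inclusion hA.le x) hx x.2
    exact ⟨⟨t, ht⟩, Subtype.ext hFt.symm⟩
  have hrange : (ψ.comp A.val).range = A.map ψ := by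
    rw [AlgHom.range_comp, Subalgebra.range_val]
  have hnonunit : ¬ IsUnit (⟨F, hFA⟩ : A) := fun h ↦
    not_isUnit_zero (hψF ▸ h.map (ψ.comp A.val))
  have hquot := hA.isCompleteIntersection.quotient_span_singleton
    (fun h ↦ hF (Subtype.ext (congrArg (fun a : A ↦ (a : Λ)) h))) hnonunit
  exact hO.map_of_model hψ hA (hquot.of_algEquiv
    (((Ideal.quotientEquivAlgOfEq k hkerA.symm).trans
      (Ideal.quotientKerEquivRange _)).trans (Subalgebra.equivOfEq _ _ hrange)))

end IsLocalCompleteIntersection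

end Map

end LocalCompleteIntersection

section ValFrac

variable {k Λ M : Type*} [Field k] [CommRing Λ] [Algebra k Λ] [LinearOrderedCommGroupWithZero M]
  {v : Valuation Λ M} {A O : Subalgebra k Λ} {z : Λ}

/-- The localization of `A` at the elements of nonzero valuation. -/
def valFrac (v : Valuation Λ M) (A : Subalgebra k Λ) : Subalgebra k Λ :=
  localizationAt ((nonZeroDivisors M).comap v) A

theorem mem_valFrac_iff {x : Λ} : x ∈ valFrac v A ↔ ∃ b ∈ A, v b ≠ 0 ∧ b * x ∈ A := by
  simp only [← mem_nonZeroDivisors_iff_ne_zero]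
  rfl

theorem mem_valFrac_of_mul_mem {b x : Λ} (hb : b ∈ valFrac v A) (hvb : v b ≠ 0)
    (hbx : b * x ∈ valFrac v A) : x ∈ valFrac v A :=
  mem_localizationAt_of_mul_mem hb (mem_nonZeroDivisors_iff_ne_zero.2 hvb) hbx

theorem localAdjoin_le_valFrac (hO : O ≤ valFrac v A) (hz : z ∈ valFrac v A) :
    localAdjoin v O z ≤ valFrac v A := by
  have hOz := adjoinElem_le hO hz
  rintro x ⟨b, hb, hvb, hbx⟩
  exact mem_valFrac_of_mul_mem (hOz hb) (by simp [MonoidHom.mem_mker.1 hvb]) (hOz hbx)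

end ValFrac

section BaseFilter

variable (k L : Type*) {Λ M : Type*} [Field k] [Field L] [CommRing Λ] [Algebra k Λ] [Algebra L Λ]
  [LinearOrderedCommGroupWithZero M] (v : Valuation Λ M)

/-- The filter of large enough local complete intersections `R` contained in the field `L`, where
`R` grows by containing prescribed elements of the valuation ring of `L`. -/
def baseFilter : Filter (Subalgebra k Λ) where
  sets := {T | ∃ W : Set L, W.Finite ∧ (∀ w ∈ W, v (algebraMap L Λ w) ≤ 1) ∧
    ∀ R : Subalgebra k Λ, IsLocalCompleteIntersection v R →
      (R : Set Λ) ⊆ Set.range (algebraMap L Λ) → algebraMap L Λ '' W ⊆ R → R ∈ T}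
  univ_sets := ⟨∅, by simp⟩
  sets_of_superset := by
    rintro T T' ⟨W, hW, hW1, h⟩ hT
    exact ⟨W, hW, hW1, fun R hR hRL hWR ↦ hT (h R hR hRL hWR)⟩
  inter_sets := by
    rintro T T' ⟨W, hW, hW1, h⟩ ⟨W', hW', hW1', h'⟩
    refine ⟨W ∪ W', hW.union hW', fun w hw ↦ hw.elim (hW1 w) (hW1' w), fun R hR hRL hWR ↦ ?_⟩
    rw [Set.image_union, Set.union_subset_iff] at hWR
    exact ⟨h R hR hRL hWR.1, h' R hR hRL hWR.2⟩

theorem eventually_isLocalCompleteIntersection :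
    ∀ᶠ R in baseFilter k L v, IsLocalCompleteIntersection v R :=
  ⟨∅, by simp, by simp, fun _ h _ _ ↦ h⟩

theorem eventually_subset_range_algebraMap :
    ∀ᶠ R : Subalgebra k Λ in baseFilter k L v, (R : Set Λ) ⊆ Set.range (algebraMap L Λ) :=
  ⟨∅, by simp, by simp, fun _ _ h _ ↦ h⟩

variable {L v}

theorem eventually_algebraMap_mem {w : L} (hw : v (algebraMap L Λ w) ≤ 1) :
    ∀ᶠ R in baseFilter k L v, algebraMap L Λ w ∈ R :=
  ⟨{w}, by simp, by simpa, fun R _ _ h ↦ by simpa using h⟩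

end BaseFilter

section UnitPart

variable {k L Λ M : Type*} [Field k] [Field L] [CommRing Λ] [Algebra k Λ] [Algebra L Λ]
  [LinearOrderedCommGroupWithZero M] {v : Valuation Λ M} {σ : M →*₀ L}
  {O O' : Subalgebra k Λ} {x y : Λ}

/-- `x` is the product of the monomial of the same valuation, given by the section `σ` of the
valuation, and an element of `O`. -/
def HasUnitPart (v : Valuation Λ M) (σ : M →*₀ L) (O : Subalgebra k Λ) (x : Λ) : Prop :=
  ∃ u ∈ O, x = algebraMap L Λ (σ (v x)) * u

theorem hasUnitPart_zero : HasUnitPart v σ O 0 :=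
  ⟨0, zero_mem O, by simp⟩

theorem hasUnitPart_section (hσ : ∀ γ, v (algebraMap L Λ (σ γ)) = γ) (γ : M) :
    HasUnitPart v σ O (algebraMap L Λ (σ γ)) :=
  ⟨1, one_mem O, by rw [hσ, mul_one]⟩

namespace HasUnitPart

theorem mono (hx : HasUnitPart v σ O x) (hO : O ≤ O') : HasUnitPart v σ O' x :=
  let ⟨u, hu, hxu⟩ := hx
  ⟨u, hO hu, hxu⟩

theorem mul (hx : HasUnitPart v σ O x) (hy : HasUnitPart v σ O y) :
    HasUnitPart v σ O (x * y) := by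
  obtain ⟨u, hu, hxu⟩ := hx
  obtain ⟨w, hw, hyw⟩ := hy
  refine ⟨u * w, mul_mem hu hw, ?_⟩
  rw [map_mul, map_mul, map_mul, mul_mul_mul_comm, ← hxu, ← hyw]

theorem eq_zero (hx : HasUnitPart v σ O x) (hvx : v x = 0) : x = 0 := by
  obtain ⟨u, -, hxu⟩ := hx
  rw [hxu, hvx, map_zero, map_zero, zero_mul]

theorem exists_eq_section_mul (hx : HasUnitPart v σ O x) {δ : M} (hδ : δ ≠ 0)
    (h : algebraMap L Λ (σ (v x / δ)) ∈ O) : ∃ u ∈ O, x = algebraMap L Λ (σ δ) * u := by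
  obtain ⟨u, hu, hxu⟩ := hx
  refine ⟨_, mul_mem h hu, ?_⟩
  rw [← mul_assoc, ← map_mul, ← map_mul, mul_div_cancel₀ _ hδ, ← hxu]

theorem exists_eq_mul (hx : HasUnitPart v σ O x) (hy : HasUnitPart v σ O y)
    (hO : IsLocalCompleteIntersection v O) (hσ : ∀ γ, v (algebraMap L Λ (σ γ)) = γ)
    (hy0 : v y ≠ 0) (h : algebraMap L Λ (σ (v x / v y)) ∈ O) : ∃ c ∈ O, x = y * c := by
  obtain ⟨u, hu, hxu⟩ := hx.exists_eq_section_mul hy0 h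
  obtain ⟨t, ht, hyt⟩ := hy
  have hvt : v t = 1 := by
    have := congrArg v hyt
    rw [map_mul, hσ] at this
    exact (mul_eq_left₀ hy0).1 this.symm
  obtain ⟨t', ht', htt'⟩ := hO.exists_inv t ht hvt
  refine ⟨_, mul_mem hu ht', ?_⟩
  linear_combination hxu - u * t' * hyt - algebraMap L Λ (σ (v y)) * u * htt'

end HasUnitPart

variable (k)

theorem eventually_section_div_mem (hσ : ∀ γ, v (algebraMap L Λ (σ γ)) = γ) {γ δ : M} (h : γ ≤ δ)
    (hδ : δ ≠ 0) : ∀ᶠ R in baseFilter k L v, algebraMap L Λ (σ (γ / δ)) ∈ R :=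
  eventually_algebraMap_mem k (by rw [hσ]; exact (div_le_one₀ (zero_lt_iff.2 hδ)).2 h)

theorem eventually_hasUnitPart_algebraMap (hσ : ∀ γ, v (algebraMap L Λ (σ γ)) = γ) (a : L) :
    ∀ᶠ R in baseFilter k L v, HasUnitPart v σ R (algebraMap L Λ a) := by
  obtain rfl | ha := eq_or_ne a 0
  · simp only [map_zero, hasUnitPart_zero, Filter.eventually_true]
  have hva : v (algebraMap L Λ a) ≠ 0 := (v.comap (algebraMap L Λ)).ne_zero_iff.2 ha
  have hσa : σ (v (algebraMap L Λ a)) ≠ 0 := (map_ne_zero σ).2 hva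
  have hle : v (algebraMap L Λ (a / σ (v (algebraMap L Λ a)))) ≤ 1 := by
    change v.comap (algebraMap L Λ) _ ≤ 1
    rw [map_div₀, Valuation.comap_apply, Valuation.comap_apply, hσ, div_self hva]
  filter_upwards [eventually_algebraMap_mem k hle] with R hR
  exact ⟨_, hR, by rw [← map_mul, mul_div_cancel₀ _ hσa]⟩

theorem eventually_hasUnitPart_add (hσ : ∀ γ, v (algebraMap L Λ (σ γ)) = γ)
    (hx : v x ≤ v (x + y)) (hy : v y ≤ v (x + y)) :
    ∀ᶠ R in baseFilter k L v, ∀ O, R ≤ O → HasUnitPart v σ O x → HasUnitPart v σ O y →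
      HasUnitPart v σ O (x + y) := by
  by_cases hxy : v (x + y) = 0
  · refine .of_forall fun R O _ hOx hOy ↦ ?_
    rw [hxy, le_zero_iff] at hx hy
    rw [hOx.eq_zero hx, hOy.eq_zero hy, add_zero]
    exact hasUnitPart_zero
  filter_upwards [eventually_section_div_mem k hσ hx hxy, eventually_section_div_mem k hσ hy hxy]
    with R hRx hRy O hRO hOx hOy
  obtain ⟨u, hu, hxu⟩ := hOx.exists_eq_section_mul hxy (hRO hRx)
  obtain ⟨w, hw, hyw⟩ := hOy.exists_eq_section_mul hxy (hRO hRy)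
  exact ⟨u + w, add_mem hu hw, by rw [mul_add, ← hxu, ← hyw]⟩

theorem exists_eventually_eq_section_mul_map (hσ : ∀ γ, v (algebraMap L Λ (σ γ)) = γ) {e : Λ[X]}
    (he : ∃ j, v (e.coeff j) ≠ 0) :
    ∃ δ : M, δ ≠ 0 ∧ ∀ᶠ R in baseFilter k L v, ∀ O : Subalgebra k Λ, R ≤ O →
      IsLocalCompleteIntersection v O → (∀ j, HasUnitPart v σ O (e.coeff j)) →
      ∃ H : O[X], (∃ j, IsUnit (H.coeff j)) ∧
        e = C (algebraMap L Λ (σ δ)) * H.map (algebraMap O Λ) := by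
  obtain ⟨i, hi⟩ := he
  have hsupp {j : ℕ} (hj : v (e.coeff j) ≠ 0) : j ∈ e.support :=
    mem_support_iff.2 fun h ↦ hj (by rw [h, map_zero])
  obtain ⟨J, -, hmax⟩ := e.support.exists_max_image (fun j ↦ v (e.coeff j)) ⟨i, hsupp hi⟩
  have hJ0 : v (e.coeff J) ≠ 0 := fun h ↦ hi (le_zero_iff.1 ((hmax i (hsupp hi)).trans_eq h))
  refine ⟨v (e.coeff J), hJ0, ?_⟩
  have hev : ∀ᶠ R in baseFilter k L v, ∀ j ∈ e.support,
      algebraMap L Λ (σ (v (e.coeff j) / v (e.coeff J))) ∈ R :=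
    (Filter.eventually_all_finset _).2 fun j hj ↦ eventually_section_div_mem k hσ (hmax j hj) hJ0
  filter_upwards [hev] with R hR O hRO hO heO
  have hdiv (j : ℕ) : ∃ u ∈ O, e.coeff j = algebraMap L Λ (σ (v (e.coeff J))) * u := by
    by_cases hj : j ∈ e.support
    · exact (heO j).exists_eq_section_mul hJ0 (hRO (hR j hj))
    · exact ⟨0, zero_mem O, by rw [notMem_support_iff.1 hj, mul_zero]⟩
  set d := algebraMap L Λ (σ (v (e.coeff J))) with hd
  have hdinv : algebraMap L Λ (σ (v (e.coeff J)))⁻¹ * d = 1 := by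
    rw [hd, ← map_mul, inv_mul_cancel₀ ((map_ne_zero σ).2 hJ0), map_one]
  obtain ⟨H, hH⟩ : C (algebraMap L Λ (σ (v (e.coeff J)))⁻¹) * e ∈ lifts (algebraMap O Λ) := by
    refine (lifts_iff_coeff_lifts _).2 fun j ↦ ?_
    obtain ⟨u, hu, hju⟩ := hdiv j
    exact ⟨⟨u, hu⟩, by rw [coeff_C_mul, hju, ← mul_assoc, hdinv, one_mul]; rfl⟩
  have heH : e = C d * H.map (algebraMap O Λ) := by
    rw [← coe_mapRingHom, hH, ← mul_assoc, ← C_mul, mul_comm d, hdinv, C_1, one_mul]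
  refine ⟨H, ⟨J, (hO.isUnit_iff _).2 ?_⟩, heH⟩
  have hJe := congrArg v (congrArg (coeff · J) heH)
  simp only [coeff_C_mul, coeff_map, map_mul, hd, hσ] at hJe
  exact (mul_eq_left₀ hJ0).1 hJe.symm

theorem exists_eventually_aeval_eval_eq (hσ : ∀ γ, v (algebraMap L Λ (σ γ)) = γ) {Y : Λ}
    {E : L[X][X]} (hE : ∃ j, v (aeval Y (E.coeff j)) ≠ 0) {Q : L[X]} {ε : M} (hε : ε ≠ 0) :
    ∃ δ : M, δ ≠ 0 ∧ ∀ᶠ R in baseFilter k L v, ∀ O : Subalgebra k Λ, R ≤ O →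
      IsLocalCompleteIntersection v O → (∀ j, HasUnitPart v σ O (aeval Y (E.coeff j))) →
      ∃ H : O[X], (∃ j, IsUnit (H.coeff j)) ∧
        ∀ q, aeval Y Q = algebraMap L Λ (σ ε) * q →
          aeval Y (E.eval Q) = algebraMap L Λ (σ δ) * aeval q H := by
  set e : Λ[X] :=
    (E.map (aeval Y : L[X] →ₐ[L] Λ).toRingHom).comp (C (algebraMap L Λ (σ ε)) * X) with he
  have hcoeff (j : ℕ) : e.coeff j = aeval Y (E.coeff j) * algebraMap L Λ (σ (ε ^ j)) := by
    rw [he, comp_C_mul_X_coeff, coeff_map, map_pow, map_pow]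
    rfl
  obtain ⟨i, hi⟩ := hE
  obtain ⟨δ, hδ, hev⟩ := exists_eventually_eq_section_mul_map k hσ (e := e)
    ⟨i, by rw [hcoeff, map_mul, hσ]; exact mul_ne_zero hi (pow_ne_zero i hε)⟩
  refine ⟨δ, hδ, hev.mono fun R hR O hRO hO hOE ↦ ?_⟩
  obtain ⟨H, hH, heH⟩ := hR O hRO hO fun j ↦ by
    rw [hcoeff]
    exact (hOE j).mul (hasUnitPart_section hσ _)
  refine ⟨H, hH, fun q hq ↦ ?_⟩
  have heval := congrArg (eval q) heH
  rw [he, eval_comp, eval_mul, eval_C, eval_X, ← hq, eval_mul, eval_C, eval_map_algebraMap] at heval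
  rw [← heval, eval_map]
  exact (eval₂_at_apply (aeval Y : L[X] →ₐ[L] Λ).toRingHom Q).symm

end UnitPart

theorem exists_eval_eq_of_monic {L : Type*} [CommRing L] {Q : L[X]} (hQ : Q.Monic)
    (hQ0 : Q.natDegree ≠ 0) (g : L[X]) :
    ∃ E : L[X][X], (∀ j, (E.coeff j).natDegree < Q.natDegree) ∧ E.eval Q = g := by
  induction hn : g.natDegree using Nat.strong_induction_on generalizing g with
  | _ n ih =>
  obtain hlt | hle := lt_or_ge g.natDegree Q.natDegree
  · refine ⟨C g, fun j ↦ ?_, eval_C⟩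
    rw [coeff_C]
    split_ifs
    · exact hlt
    · rw [natDegree_zero]
      exact Nat.pos_of_ne_zero hQ0
  · obtain ⟨E, hE, hEQ⟩ := ih (g /ₘ Q).natDegree (by
      rw [natDegree_divByMonic g hQ]
      omega) _ rfl
    refine ⟨C (g %ₘ Q) + X * E, fun j ↦ ?_, ?_⟩
    · cases j with
      | zero => simpa using natDegree_modByMonic_lt g hQ fun h ↦ hQ0 (by rw [h, natDegree_one])
      | succ j => simpa [coeff_C] using hE j
    · rw [eval_add, eval_C, eval_mul, eval_X, hEQ, modByMonic_add_div]

theorem map_C_sup_span_C_mul_X_sub_C {S : Type*} [CommRing S] {I : Ideal S} {c : S} (hc : c ∈ I)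
    (F : S) : I.map C ⊔ Ideal.span {C c * X - C F} = (I ⊔ Ideal.span {F}).map C := by
  rw [Ideal.map_sup, Ideal.map_span, Set.image_singleton]
  have hcX : C c * X ∈ I.map C := Ideal.mul_mem_right _ _ (Ideal.mem_map_of_mem C hc)
  refine le_antisymm (sup_le le_sup_left ?_) (sup_le le_sup_left ?_)
  · rw [Ideal.span_singleton_le_iff_mem]
    exact sub_mem (Ideal.mem_sup_left hcX) (Ideal.mem_sup_right (Ideal.mem_span_singleton_self _))
  · rw [Ideal.span_singleton_le_iff_mem]
    have hsub := sub_mem (Ideal.mem_sup_left hcX)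
      (Ideal.mem_sup_right (Ideal.mem_span_singleton_self (C c * X - C F)))
    rwa [sub_sub_cancel] at hsub

theorem IsRelativelyRegular.span_inf_map_C_le {R S : Type*} [CommRing R] [CommRing S] {f : R →+* S}
    {F : S} (hF : IsRelativelyRegular f F) (c : S) (J : Ideal R) :
    Ideal.span {C c * X - C F} ⊓ (J.map f).map C ≤
      Ideal.span {C c * X - C F} * (J.map f).map C := by
  rintro x ⟨hx, hxJ⟩
  obtain ⟨s, rfl⟩ := Ideal.mem_span_singleton.1 hx
  exact Ideal.mul_mem_mul (Ideal.mem_span_singleton_self _)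
    (mem_map_C_of_C_mul_X_sub_C_mul_mem (hF J) hxJ)

theorem IsRelativelyRegular.dvd_of_dvd_mul {R S : Type*} [CommRing R] [CommRing S] {f : R →+* S}
    {F : S} (hF : IsRelativelyRegular f F) {c : R} {b : S} (hb : f c ∣ F * b) : f c ∣ b := by
  have hreg := hF (Ideal.span {c}) b
  simp only [Ideal.map_span, Set.image_singleton, Ideal.mem_span_singleton] at hreg
  exact hreg hb

section RangeAlgebraMap

variable {k L Λ : Type*} [Field k] [Field L] [CommRing Λ] [Algebra k Λ] [Algebra L Λ]
  {R : Subalgebra k Λ}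

theorem exists_ringHom_of_subset_range_algebraMap [Nontrivial Λ]
    (h : (R : Set Λ) ⊆ Set.range (algebraMap L Λ)) :
    ∃ ℓ : R →+* L, ∀ r : R, algebraMap L Λ (ℓ r) = r := by
  choose ℓ hℓ using fun r : R ↦ h r.2
  have hinj := (algebraMap L Λ).injective
  exact ⟨⟨⟨⟨ℓ, hinj (by simp [hℓ])⟩, fun a b ↦ hinj (by simp [hℓ])⟩, hinj (by simp [hℓ]),
    fun a b ↦ hinj (by simp [hℓ])⟩, hℓ⟩

theorem aeval_map_of_algebraMap_apply_eq {ℓ : R →+* L} (hℓ : ∀ r : R, algebraMap L Λ (ℓ r) = r)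
    (Y : Λ) (p : R[X]) : aeval Y (p.map ℓ) = aeval Y p := by
  rw [aeval_def, eval₂_map, aeval_def]
  congr 1
  exact RingHom.ext hℓ

theorem injective_of_algebraMap_apply_eq {ℓ : R →+* L} (hℓ : ∀ r : R, algebraMap L Λ (ℓ r) = r) :
    Function.Injective ℓ :=
  fun a b hab ↦ Subtype.ext (by rw [← hℓ, hab, hℓ])

theorem injective_aeval_of_subset_range_algebraMap [Nontrivial Λ]
    (h : (R : Set Λ) ⊆ Set.range (algebraMap L Λ)) {Y : Λ}
    (hY : Function.Injective (aeval Y : L[X] →ₐ[L] Λ)) :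
    Function.Injective (aeval Y : R[X] →ₐ[R] Λ) := by
  obtain ⟨ℓ, hℓ⟩ := exists_ringHom_of_subset_range_algebraMap h
  have hcomp : (aeval Y : R[X] → Λ) = (aeval Y : L[X] → Λ) ∘ Polynomial.map ℓ :=
    funext fun p ↦ (aeval_map_of_algebraMap_apply_eq hℓ Y p).symm
  rw [hcomp]
  exact hY.comp (Polynomial.map_injective ℓ (injective_of_algebraMap_apply_eq hℓ))

end RangeAlgebraMap

section IsAdapted

variable {k L Λ M : Type*} [Field k] [Field L] [CommRing Λ] [Algebra k Λ] [Algebra L Λ]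
  [LinearOrderedCommGroupWithZero M]

/-- `O` is a local complete intersection over `R`, flat over `R`, such that the values at `Y` of
the polynomials of `S` are monomials times elements of `O`, and the values at `Y` of the
polynomials `g` of `G` are monomials of valuation `δ g` times relatively regular elements of
`O`. -/
structure IsAdapted (v : Valuation Λ M) (σ : M →*₀ L) (Y : Λ) (R O : Subalgebra k Λ)
    (S G : Set L[X]) (δ : L[X] → M) : Prop where
  le : R ≤ O
  mem : Y ∈ O
  isLocalCompleteIntersection : IsLocalCompleteIntersection v O
  isColonFlat : IsColonFlat (inclusion le).toRingHom
  le_valFrac : O ≤ valFrac v (adjoinElem R Y)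
  hasUnitPart : ∀ f ∈ S, HasUnitPart v σ O (aeval Y f)
  regular : ∀ g ∈ G, ∃ F : O, aeval Y g = algebraMap L Λ (σ (δ g)) * F ∧
    IsRelativelyRegular (inclusion le).toRingHom F

variable {v : Valuation Λ M} {σ : M →*₀ L} {Y z : Λ} {R O : Subalgebra k Λ} {S S' G G' : Set L[X]}
  {δ δ' : L[X] → M}

theorem isAdapted_localAdjoin {ρ : O[X]} (hR : IsLocalCompleteIntersection v R) (h : R ≤ O)
    [IsLocalRing R] (hflat : IsColonFlat (inclusion h).toRingHom)
    (hO' : IsLocalCompleteIntersection v (localAdjoin v O z))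
    (hz : IsLocalizedAdjoinRoot (inclusion (le_localAdjoin v O z)).toRingHom
      ⟨z, self_mem_localAdjoin v O z⟩ ρ)
    (hρ : ∀ J : Ideal R, Ideal.span {ρ} ⊓ (J.map (inclusion h).toRingHom).map C ≤
      Ideal.span {ρ} * (J.map (inclusion h).toRingHom).map C)
    {I : Ideal O} (hI : ((IsLocalRing.maximalIdeal R).map (inclusion h).toRingHom).map C ⊔
      Ideal.span {ρ} = I.map C)
    (hY : Y ∈ localAdjoin v O z) (hfrac : O ≤ valFrac v (adjoinElem R Y))
    (hzfrac : z ∈ valFrac v (adjoinElem R Y))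
    (hS : ∀ f ∈ S, HasUnitPart v σ (localAdjoin v O z) (aeval Y f))
    (hG : ∀ g ∈ G, ∃ H : O[X], (∃ j, IsUnit (H.coeff j)) ∧
      aeval Y g = algebraMap L Λ (σ (δ g)) * aeval z H) :
    IsAdapted v σ Y R (localAdjoin v O z) S G δ := by
  have hcomp : (inclusion (h.trans (le_localAdjoin v O z))).toRingHom =
      (inclusion (le_localAdjoin v O z)).toRingHom.comp (inclusion h).toRingHom := rfl
  have hflat' := hcomp ▸ hz.isColonFlat hflat hρ
  refine ⟨h.trans (le_localAdjoin v O z), hY, hO', hflat', localAdjoin_le_valFrac hfrac hzfrac,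
    hS, fun g hg ↦ ?_⟩
  obtain ⟨H, ⟨j, hj⟩, hgH⟩ := hG g hg
  have hzH : aeval z H ∈ localAdjoin v O z :=
    le_localizationAt _ _ (mem_adjoinElem_iff.2 ⟨H, rfl⟩)
  exact ⟨⟨aeval z H, hzH⟩, hgH,
    hz.isRelativelyRegular hR hO' hflat' hI hj rfl⟩

theorem eventually_isAdapted_localAdjoin_of_injective [IsDomain Λ] (hv : ∀ a, v a ≠ 0 → IsUnit a)
    (hY : Function.Injective (aeval Y : L[X] →ₐ[L] Λ)) (hvY : v Y ≤ 1)
    (hS : ∀ᶠ R in baseFilter k L v, ∀ f ∈ S, HasUnitPart v σ R (aeval Y f))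
    (hG : ∀ᶠ R : Subalgebra k Λ in baseFilter k L v, ∀ g ∈ G, ∃ H : R[X],
      (∃ j, IsUnit (H.coeff j)) ∧ aeval Y g = algebraMap L Λ (σ (δ g)) * aeval Y H) :
    ∀ᶠ R in baseFilter k L v, IsAdapted v σ Y R (localAdjoin v R Y) S G δ := by
  filter_upwards [hS, hG, eventually_isLocalCompleteIntersection k L v,
    eventually_subset_range_algebraMap k L v] with R hRS hRG hR hRL
  have hinj := injective_aeval_of_subset_range_algebraMap hRL hY
  have := hR.isLocalRing
  have hO' := hR.localAdjoin_of_injective hv hinj hvY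
  exact isAdapted_localAdjoin (ρ := 0) hR le_rfl isColonFlat_id hO'
    (hO'.isLocalizedAdjoinRoot (map_zero _) fun p hp ↦ by rw [hinj (hp.trans (map_zero _).symm)])
    (by simp) (I := (IsLocalRing.maximalIdeal R).map (inclusion le_rfl).toRingHom) (by simp)
    (self_mem_localAdjoin v R Y) ((le_adjoinElem R Y).trans (le_localizationAt _ _))
    (le_localizationAt _ _ (self_mem_adjoinElem R Y))
    (fun f hf ↦ (hRS f hf).mono (le_localAdjoin v R Y)) hRG

theorem exists_isAdapted_of_natDegree_eq_zero [IsDomain Λ] (hv : ∀ a, v a ≠ 0 → IsUnit a)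
    (hσ : ∀ γ, v (algebraMap L Λ (σ γ)) = γ)
    (hY : Function.Injective (aeval Y : L[X] →ₐ[L] Λ)) (hvY : v Y ≤ 1)
    (hS : S.Finite) (hS0 : ∀ f ∈ S, f.natDegree = 0) (hG : G.Finite) (hG0 : ∀ g ∈ G, g ≠ 0) :
    ∃ δ : L[X] → M, (∀ g ∈ G, δ g ≠ 0) ∧
      ∀ᶠ R in baseFilter k L v, ∃ O, IsAdapted v σ Y R O S G δ := by
  have hex (g : L[X]) (hg : g ∈ G) := exists_eventually_eq_section_mul_map k hσ
    (e := g.map (algebraMap L Λ)) ⟨g.natDegree, by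
      rw [coeff_map]
      exact (v.comap (algebraMap L Λ)).ne_zero_iff.2 (leadingCoeff_ne_zero.2 (hG0 g hg))⟩
  choose! δ hδ0 hδ using hex
  have hcoeff : ∀ᶠ R in baseFilter k L v, ∀ g ∈ G, ∀ j ∈ g.support,
      HasUnitPart v σ R (algebraMap L Λ (g.coeff j)) :=
    (Filter.eventually_all_finite hG).2 fun g _ ↦
      (Filter.eventually_all_finset _).2 fun j _ ↦ eventually_hasUnitPart_algebraMap k hσ _
  refine ⟨δ, hδ0, (eventually_isAdapted_localAdjoin_of_injective hv hY hvY ?_ ?_).mono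
    fun R hR ↦ ⟨_, hR⟩⟩
  · refine (Filter.eventually_all_finite hS).2 fun f hf ↦ ?_
    rw [eq_C_of_natDegree_eq_zero (hS0 f hf), aeval_C]
    exact eventually_hasUnitPart_algebraMap k hσ _
  · filter_upwards [hcoeff, (Filter.eventually_all_finite hG).2 hδ,
      eventually_isLocalCompleteIntersection k L v] with R hRcoeff hRδ hR g hg
    obtain ⟨H, hH, hgH⟩ := hRδ g hg R le_rfl hR fun j ↦ by
      rw [coeff_map]
      by_cases hj : j ∈ g.support
      · exact hRcoeff g hg j hj
      · rw [notMem_support_iff.1 hj, map_zero]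
        exact hasUnitPart_zero
    refine ⟨H, hH, ?_⟩
    rw [← eval_map_algebraMap, hgH, eval_mul, eval_C, eval_map_algebraMap]

/-! ### Adjoining the quotient of `Q(Y)` by the monomial of the same valuation -/

theorem IsAdapted.exists_quotient (hσ : ∀ γ, v (algebraMap L Λ (σ γ)) = γ) {Q : L[X]}
    (hQv : v (aeval Y Q) ≠ 0) (hδ : δ Q ≠ 0)
    (hc : algebraMap L Λ (σ (v (aeval Y Q) / δ Q)) ∈ R) (hA : IsAdapted v σ Y R O S G δ)
    (hQ : Q ∈ G) :
    ∃ (c : R) (F : O) (z : Λ), v c = v (aeval Y Q) / δ Q ∧ c * z = F ∧ v z = 1 ∧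
      aeval Y Q = algebraMap L Λ (σ (v (aeval Y Q))) * z ∧
      IsRelativelyRegular (inclusion hA.le).toRingHom F := by
  obtain ⟨F, hF, hreg⟩ := hA.regular Q hQ
  have hγ0 : σ (v (aeval Y Q) / δ Q) ≠ 0 := (map_ne_zero σ).2 (div_ne_zero hQv hδ)
  have hcz : algebraMap L Λ (σ (v (aeval Y Q) / δ Q)) *
      (algebraMap L Λ (σ (v (aeval Y Q) / δ Q))⁻¹ * F) = F := by
    rw [← mul_assoc, ← map_mul, mul_inv_cancel₀ hγ0, map_one, one_mul]
  set z : Λ := algebraMap L Λ (σ (v (aeval Y Q) / δ Q))⁻¹ * F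
  have hQz : aeval Y Q = algebraMap L Λ (σ (v (aeval Y Q))) * z := by
    nth_rw 1 [hF, ← hcz]
    rw [← mul_assoc, ← map_mul, ← map_mul, mul_div_cancel₀ _ hδ]
  have hvz := congrArg v hQz
  rw [map_mul, hσ] at hvz
  exact ⟨⟨_, hc⟩, F, z, hσ _, hcz, (mul_eq_left₀ hQv).1 hvz.symm, hQz, hreg⟩

theorem IsAdapted.adjoin [IsDomain Λ] (hv : ∀ a, v a ≠ 0 → IsUnit a)
    (hσ : ∀ γ, v (algebraMap L Λ (σ γ)) = γ) {Q : L[X]} (hQv : v (aeval Y Q) ≠ 0)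
    (hQδ : v (aeval Y Q) < δ Q) (hR : IsLocalCompleteIntersection v R)
    (hc : algebraMap L Λ (σ (v (aeval Y Q) / δ Q)) ∈ R)
    (hA : IsAdapted v σ Y R O S' G' δ) (hQ : Q ∈ G')
    (hS : ∀ O', O ≤ O' → HasUnitPart v σ O' (aeval Y Q) →
      ∀ f ∈ S, HasUnitPart v σ O' (aeval Y f))
    (hG : ∀ g ∈ G, ∃ H : O[X], (∃ j, IsUnit (H.coeff j)) ∧
      ∀ q, aeval Y Q = algebraMap L Λ (σ (v (aeval Y Q))) * q →
      aeval Y g = algebraMap L Λ (σ (δ' g)) * aeval q H) :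
    ∃ O', IsAdapted v σ Y R O' S G δ' := by
  have := hR.isLocalRing
  have hδ0 : 0 < δ Q := zero_le.trans_lt hQδ
  obtain ⟨c, F, z, hvc, hcz, hvz, hQz, hreg⟩ := hA.exists_quotient hσ hQv hδ0.ne' hc hQ
  have hvc0 : v c ≠ 0 := by
    rw [hvc]
    exact div_ne_zero hQv hδ0.ne'
  have hcm : c ∈ IsLocalRing.maximalIdeal R := by
    rw [IsLocalRing.mem_maximalIdeal, mem_nonunits_iff, hR.isUnit_iff, hvc]
    exact ((div_lt_one₀ hδ0).2 hQδ).ne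
  have hc0 : inclusion hA.le c ≠ 0 := fun h ↦ hvc0 (by
    rw [show (c : Λ) = 0 from congrArg Subtype.val h, map_zero])
  have hFc (b : O) : inclusion hA.le c ∣ F * b → inclusion hA.le c ∣ b := hreg.dvd_of_dvd_mul
  have hO' := hA.isLocalCompleteIntersection.localAdjoin_of_mul_eq hv hc0 hFc hcz hvz.le
  refine ⟨localAdjoin v O z, isAdapted_localAdjoin hR hA.le hA.isColonFlat hO'
    (hO'.isLocalizedAdjoinRoot ?_ fun p hp ↦ ?_) (hreg.span_inf_map_C_le (inclusion hA.le c))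
    (map_C_sup_span_C_mul_X_sub_C (Ideal.mem_map_of_mem (inclusion hA.le).toRingHom hcm) F)
    (le_localAdjoin v O z hA.mem) hA.le_valFrac ?_
    (hS _ (le_localAdjoin v O z) ⟨z, self_mem_localAdjoin v O z, hQz⟩) fun g hg ↦ ?_⟩
  · rw [map_sub, map_mul, aeval_C, aeval_C, aeval_X]
    exact sub_eq_zero.2 hcz
  · exact C_mul_X_sub_C_dvd_of_eval₂_eq_zero (g := algebraMap O Λ) Subtype.val_injective hc0 hFc
      hcz hp
  · refine mem_valFrac_of_mul_mem (le_localizationAt _ _ (le_adjoinElem R Y c.2)) hvc0 ?_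
    rw [hcz]
    exact hA.le_valFrac F.2
  · obtain ⟨H, hH, hgH⟩ := hG g hg
    exact ⟨H, hH, hgH z hQz⟩

theorem IsAdapted.valuation_le (hσ : ∀ γ, v (algebraMap L Λ (σ γ)) = γ)
    (hA : IsAdapted v σ Y R O S G δ) {g : L[X]} (hg : g ∈ G) : v (aeval Y g) ≤ δ g := by
  obtain ⟨F, hF, -⟩ := hA.regular g hg
  rw [hF, map_mul, hσ]
  exact mul_le_of_le_one_right' (hA.isLocalCompleteIntersection.le_one F F.2)

theorem IsAdapted.of_valuation_eq {Q : L[X]} (hA : IsAdapted v σ Y R O S' (insert Q G) δ)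
    (hQ : v (aeval Y Q) = δ Q)
    (hS : HasUnitPart v σ O (aeval Y Q) → ∀ f ∈ S, HasUnitPart v σ O (aeval Y f)) :
    IsAdapted v σ Y R O S G δ := by
  obtain ⟨F, hF, -⟩ := hA.regular Q (Set.mem_insert Q G)
  rw [← hQ] at hF
  exact { hA with
    hasUnitPart := hS ⟨F, F.2, hF⟩
    regular := fun g hg ↦ hA.regular g (Set.mem_insert_of_mem Q hg) }

end IsAdapted

section ExistsIsAdapted

variable {k L Λ M : Type*} [Field k] [Field L] [CommRing Λ] [Algebra k Λ] [Algebra L Λ]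
  [LinearOrderedCommGroupWithZero M] {v : Valuation Λ M} {σ : M →*₀ L} {Y : Λ} {n : ℕ}
  {S S' G : Set L[X]}

theorem exists_monic_forall_valuation_le (v : Valuation Λ M) (Y : Λ) (hS : S.Finite) (n : ℕ) :
    ∃ Q : L[X], Q.Monic ∧ Q.natDegree = n ∧ ∀ f ∈ S, f ≠ 0 → f.natDegree = n →
      v (aeval Y Q) ≤ v (aeval Y (f * C f.leadingCoeff⁻¹)) := by
  have hfin : (insert (X ^ n) ((fun f ↦ f * C f.leadingCoeff⁻¹) ''
      {f ∈ S | f ≠ 0 ∧ f.natDegree = n})).Finite := ((hS.sep _).image _).insert _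
  obtain ⟨Q, hQ, hmin⟩ := Set.exists_min_image _ (fun f ↦ v (aeval Y f)) hfin
    (Set.insert_nonempty _ _)
  refine ⟨Q, ?_, ?_, fun f hf hf0 hfn ↦ hmin _ (Or.inr ⟨f, ⟨hf, hf0, hfn⟩, rfl⟩)⟩
  · obtain rfl | ⟨f, ⟨-, hf0, -⟩, rfl⟩ := hQ
    · exact monic_X_pow n
    · exact monic_mul_leadingCoeff_inv hf0
  · obtain rfl | ⟨f, ⟨-, hf0, hfn⟩, rfl⟩ := hQ
    · exact natDegree_X_pow n
    · exact (natDegree_mul_leadingCoeff_inv f hf0).trans hfn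

variable (k)

theorem eventually_hasUnitPart_of_valuation_le (hσ : ∀ γ, v (algebraMap L Λ (σ γ)) = γ)
    {f Q : L[X]} (hf : f ≠ 0) (hQf : v (aeval Y Q) ≤ v (aeval Y (f * C f.leadingCoeff⁻¹))) :
    ∀ᶠ R in baseFilter k L v, ∀ O, R ≤ O → HasUnitPart v σ O (aeval Y Q) →
      HasUnitPart v σ O (aeval Y (f * C f.leadingCoeff⁻¹ - Q)) → HasUnitPart v σ O (aeval Y f) := by
  have hadd : aeval Y Q + aeval Y (f * C f.leadingCoeff⁻¹ - Q) =
      aeval Y (f * C f.leadingCoeff⁻¹) := by rw [← map_add, add_sub_cancel]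
  have hmul : aeval Y (f * C f.leadingCoeff⁻¹) * algebraMap L Λ f.leadingCoeff = aeval Y f := by
    rw [← aeval_C Y f.leadingCoeff, ← map_mul, mul_assoc, ← C_mul,
      inv_mul_cancel₀ (leadingCoeff_ne_zero.2 hf), C_1, mul_one]
  filter_upwards [eventually_hasUnitPart_algebraMap k hσ f.leadingCoeff,
    eventually_hasUnitPart_add k hσ (x := aeval Y Q) (y := aeval Y (f * C f.leadingCoeff⁻¹ - Q))
      (hadd ▸ hQf) (by rw [hadd, map_sub]; exact (v.map_sub _ _).trans (max_le le_rfl hQf))]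
    with R hRf hRadd O hRO hOQ hOr
  rw [← hmul]
  exact (hadd ▸ hRadd O hRO hOQ hOr).mul (hRf.mono hRO)

/-- Division by a monic `Q` whose value at `Y` is minimal leaves remainders of lower degree, and
the ultrametric inequality shows that no cancellation occurs. -/
theorem exists_monic_eventually_hasUnitPart (hσ : ∀ γ, v (algebraMap L Λ (σ γ)) = γ)
    (hS : S.Finite) (hSn : ∀ f ∈ S, f.natDegree ≤ n + 1) :
    ∃ Q : L[X], Q.Monic ∧ Q.natDegree = n + 1 ∧ ∃ S' : Set L[X], S'.Finite ∧
      (∀ f ∈ S', f.natDegree ≤ n) ∧ ∀ᶠ R in baseFilter k L v, ∀ O, R ≤ O →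
        HasUnitPart v σ O (aeval Y Q) → (∀ f ∈ S', HasUnitPart v σ O (aeval Y f)) →
        ∀ f ∈ S, HasUnitPart v σ O (aeval Y f) := by
  obtain ⟨Q, hQm, hQn, hmin⟩ := exists_monic_forall_valuation_le v Y hS (n + 1)
  have hS0 {f : L[X]} (hfn : f.natDegree = n + 1) : f ≠ 0 := by
    rintro rfl
    simp at hfn
  refine ⟨Q, hQm, hQn, {f ∈ S | f.natDegree ≤ n} ∪ (fun f ↦ f * C f.leadingCoeff⁻¹ - Q) ''
    {f ∈ S | f.natDegree = n + 1}, (hS.sep _).union ((hS.sep _).image _), ?_, ?_⟩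
  · rintro _ (hf | ⟨f, ⟨-, hfn⟩, rfl⟩)
    · exact hf.2
    · have hfm := monic_mul_leadingCoeff_inv (hS0 hfn)
      have hdeg : (f * C f.leadingCoeff⁻¹).degree = Q.degree := by
        rw [degree_eq_natDegree hfm.ne_zero, degree_eq_natDegree hQm.ne_zero,
          natDegree_mul_leadingCoeff_inv f (hS0 hfn), hfn, hQn]
      have hlt := degree_sub_lt_right hdeg hQm.ne_zero (hfm.trans hQm.symm)
      obtain h0 | h0 := eq_or_ne (f * C f.leadingCoeff⁻¹ - Q) 0
      · exact (congrArg natDegree h0).trans_le n.zero_le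
      · exact Nat.lt_succ_iff.1 ((natDegree_lt_natDegree h0 hlt).trans_eq hQn)
  · have hev : ∀ᶠ R in baseFilter k L v, ∀ f ∈ S, f.natDegree = n + 1 → ∀ O, R ≤ O →
        HasUnitPart v σ O (aeval Y Q) →
        HasUnitPart v σ O (aeval Y (f * C f.leadingCoeff⁻¹ - Q)) →
        HasUnitPart v σ O (aeval Y f) := by
      refine (Filter.eventually_all_finite hS).2 fun f hf ↦ Filter.eventually_all.2 fun hfn ↦ ?_
      exact eventually_hasUnitPart_of_valuation_le k hσ (hS0 hfn) (hmin f hf (hS0 hfn) hfn)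
    filter_upwards [hev] with R hR O hRO hOQ hOS' f hf
    obtain hfn | hfn := (hSn f hf).lt_or_eq
    · exact hOS' f (Or.inl ⟨hf, Nat.lt_succ_iff.1 hfn⟩)
    · exact hR f hf hfn O hRO hOQ (hOS' _ (Or.inr ⟨f, ⟨hf, hfn⟩, rfl⟩))

theorem exists_eventually_aeval_eq_section_mul (hσ : ∀ γ, v (algebraMap L Λ (σ γ)) = γ)
    (hn : ∀ f : L[X], f ≠ 0 → f.natDegree ≤ n + 1 → v (aeval Y f) ≠ 0)
    (hG : G.Finite) (hG0 : ∀ g ∈ G, g ≠ 0) {Q : L[X]} (hQm : Q.Monic)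
    (hQn : Q.natDegree = n + 1) :
    ∃ S' : Set L[X], S'.Finite ∧ (∀ f ∈ S', f.natDegree ≤ n) ∧ ∃ δ : L[X] → M,
      (∀ g ∈ G, δ g ≠ 0) ∧ ∀ᶠ R in baseFilter k L v, ∀ O : Subalgebra k Λ, R ≤ O →
        IsLocalCompleteIntersection v O → (∀ f ∈ S', HasUnitPart v σ O (aeval Y f)) →
        ∀ g ∈ G, ∃ H : O[X], (∃ j, IsUnit (H.coeff j)) ∧
          ∀ q, aeval Y Q = algebraMap L Λ (σ (v (aeval Y Q))) * q →
          aeval Y g = algebraMap L Λ (σ (δ g)) * aeval q H := by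
  choose E hE hEQ using exists_eval_eq_of_monic hQm (by omega)
  have hEn (g : L[X]) (j : ℕ) : ((E g).coeff j).natDegree ≤ n := by
    have := hE g j
    omega
  have hex (g : L[X]) (hg : g ∈ G) := exists_eventually_aeval_eval_eq k hσ (Y := Y) (E := E g) (by
    have hEg : E g ≠ 0 := fun h ↦ hG0 g hg (by rw [← hEQ g, h, eval_zero])
    exact ⟨_, hn _ (leadingCoeff_ne_zero.2 hEg) ((hEn g _).trans n.le_succ)⟩)
    (hn Q hQm.ne_zero hQn.le) (Q := Q)
  choose! δ hδ0 hδ using hex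
  refine ⟨⋃ g ∈ G, insert 0 ((E g).coeffs : Set L[X]),
    hG.biUnion fun g _ ↦ (E g).coeffs.finite_toSet.insert 0, ?_, δ, hδ0, ?_⟩
  · simp only [Set.mem_iUnion]
    rintro f ⟨g, -, rfl | hf⟩
    · exact natDegree_zero.trans_le n.zero_le
    · obtain ⟨j, -, rfl⟩ := mem_coeffs_iff.1 hf
      exact hEn g j
  · filter_upwards [(Filter.eventually_all_finite hG).2 hδ] with R hR O hRO hO hOS' g hg
    have hOE (j : ℕ) : HasUnitPart v σ O (aeval Y ((E g).coeff j)) := by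
      refine hOS' _ (Set.mem_biUnion hg ?_)
      by_cases hj : (E g).coeff j = 0
      · exact Or.inl hj
      · exact Or.inr (coeff_mem_coeffs hj)
    obtain ⟨H, hH, hgH⟩ := hR g hg O hRO hO hOE
    exact ⟨H, hH, fun q hq ↦ by rw [← hgH q hq, hEQ]⟩

variable {k}

theorem exists_eventually_isAdapted_of_insert [IsDomain Λ] (hv : ∀ a, v a ≠ 0 → IsUnit a)
    (hσ : ∀ γ, v (algebraMap L Λ (σ γ)) = γ) {Q : L[X]} (hQv : v (aeval Y Q) ≠ 0)
    {δ δ' : L[X] → M} (hδ0 : ∀ g ∈ insert Q G, δ g ≠ 0) (hδ'0 : ∀ g ∈ G, δ' g ≠ 0)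
    (hA : ∀ᶠ R in baseFilter k L v, ∃ O, IsAdapted v σ Y R O S' (insert Q G) δ)
    (hS : ∀ᶠ R in baseFilter k L v, ∀ O, R ≤ O → HasUnitPart v σ O (aeval Y Q) →
      (∀ f ∈ S', HasUnitPart v σ O (aeval Y f)) → ∀ f ∈ S, HasUnitPart v σ O (aeval Y f))
    (hG : ∀ᶠ R in baseFilter k L v, ∀ O : Subalgebra k Λ, R ≤ O →
      IsLocalCompleteIntersection v O → (∀ f ∈ S', HasUnitPart v σ O (aeval Y f)) →
      ∀ g ∈ G, ∃ H : O[X], (∃ j, IsUnit (H.coeff j)) ∧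
        ∀ q, aeval Y Q = algebraMap L Λ (σ (v (aeval Y Q))) * q →
        aeval Y g = algebraMap L Λ (σ (δ' g)) * aeval q H) :
    ∃ δ : L[X] → M, (∀ g ∈ G, δ g ≠ 0) ∧
      ∀ᶠ R in baseFilter k L v, ∃ O, IsAdapted v σ Y R O S G δ := by
  have hQG := Set.mem_insert Q G
  obtain hlt | heq | hgt := lt_trichotomy (v (aeval Y Q)) (δ Q)
  · refine ⟨δ', hδ'0, ?_⟩
    filter_upwards [hA, hS, hG, eventually_isLocalCompleteIntersection k L v,
      eventually_section_div_mem k hσ hlt.le (hδ0 Q hQG)] with R ⟨O, hRO⟩ hRS hRG hR hc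
    exact hRO.adjoin hv hσ hQv hlt hR hc hQG
      (fun O' hOO' hOQ ↦ hRS O' (hRO.le.trans hOO') hOQ fun f hf ↦ (hRO.hasUnitPart f hf).mono hOO')
      (hRG O hRO.le hRO.isLocalCompleteIntersection hRO.hasUnitPart)
  · refine ⟨δ, fun g hg ↦ hδ0 g (Set.mem_insert_of_mem Q hg), ?_⟩
    filter_upwards [hA, hS] with R ⟨O, hRO⟩ hRS
    exact ⟨O, hRO.of_valuation_eq heq fun hOQ ↦ hRS O hRO.le hOQ hRO.hasUnitPart⟩
  · refine ⟨δ, fun g hg ↦ hδ0 g (Set.mem_insert_of_mem Q hg), ?_⟩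
    filter_upwards [hA] with R ⟨O, hRO⟩
    exact absurd (hRO.valuation_le hσ hQG) hgt.not_ge

theorem exists_eventually_isAdapted [IsDomain Λ] (hv : ∀ a, v a ≠ 0 → IsUnit a)
    (hσ : ∀ γ, v (algebraMap L Λ (σ γ)) = γ)
    (hY : Function.Injective (aeval Y : L[X] →ₐ[L] Λ)) (hvY : v Y ≤ 1)
    (hn : ∀ f : L[X], f ≠ 0 → f.natDegree ≤ n → v (aeval Y f) ≠ 0)
    (hS : S.Finite) (hSn : ∀ f ∈ S, f.natDegree ≤ n) (hG : G.Finite) (hG0 : ∀ g ∈ G, g ≠ 0) :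
    ∃ δ : L[X] → M, (∀ g ∈ G, δ g ≠ 0) ∧
      ∀ᶠ R in baseFilter k L v, ∃ O, IsAdapted v σ Y R O S G δ := by
  induction n generalizing S G with
  | zero =>
    exact exists_isAdapted_of_natDegree_eq_zero hv hσ hY hvY hS
      (fun f hf ↦ Nat.le_zero.1 (hSn f hf)) hG hG0
  | succ n ih =>
    obtain ⟨Q, hQm, hQn, S₁, hS₁, hS₁n, hSev⟩ :=
      exists_monic_eventually_hasUnitPart k (Y := Y) hσ hS hSn
    obtain ⟨S₂, hS₂, hS₂n, δ', hδ'0, hGev⟩ :=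
      exists_eventually_aeval_eq_section_mul k hσ hn hG hG0 hQm hQn
    obtain ⟨δ, hδ0, hA⟩ := ih (fun f hf hfn ↦ hn f hf (hfn.trans n.le_succ)) (hS₁.union hS₂)
      (fun f hf ↦ hf.elim (hS₁n f) (hS₂n f)) (hG.insert Q)
      (Set.forall_mem_insert.2 ⟨hQm.ne_zero, hG0⟩)
    refine exists_eventually_isAdapted_of_insert hv hσ (hn Q hQm.ne_zero hQn.le) hδ0 hδ'0 hA ?_ ?_
    · exact hSev.mono fun R hR O hRO hOQ hOS ↦ hR O hRO hOQ fun f hf ↦ hOS f (Or.inl hf)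
    · exact hGev.mono fun R hR O hRO hO hOS ↦ hR O hRO hO fun f hf ↦ hOS f (Or.inr hf)

theorem exists_eventually_isAdapted_forall_eq_mul [IsDomain Λ] (hv : ∀ a, v a ≠ 0 → IsUnit a)
    (hσ : ∀ γ, v (algebraMap L Λ (σ γ)) = γ)
    (hY : Function.Injective (aeval Y : L[X] →ₐ[L] Λ)) (hvY : v Y ≤ 1)
    (hn : ∀ f : L[X], f ≠ 0 → f.natDegree ≤ n → v (aeval Y f) ≠ 0) (hG : G.Finite)
    (hG0 : ∀ g ∈ G, g ≠ 0) {ι : Type*} {D : Set ι} (hD : D.Finite) {f g : ι → L[X]}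
    (hf : ∀ d ∈ D, (f d).natDegree ≤ n) (hg : ∀ d ∈ D, (g d).natDegree ≤ n)
    (hg0 : ∀ d ∈ D, v (aeval Y (g d)) ≠ 0)
    (hfg : ∀ d ∈ D, v (aeval Y (f d)) ≤ v (aeval Y (g d))) :
    ∃ (S : Set L[X]) (δ : L[X] → M), (∀ g ∈ G, δ g ≠ 0) ∧
      ∀ᶠ R in baseFilter k L v, ∃ O, IsAdapted v σ Y R O S G δ ∧
        ∀ d ∈ D, ∃ c ∈ O, aeval Y (f d) = aeval Y (g d) * c := by
  obtain ⟨δ, hδ0, hδ⟩ := exists_eventually_isAdapted (k := k) (S := f '' D ∪ g '' D) hv hσ hY hvY hn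
    ((hD.image f).union (hD.image g))
    (Set.union_subset (Set.image_subset_iff.2 hf) (Set.image_subset_iff.2 hg)) hG hG0
  refine ⟨f '' D ∪ g '' D, δ, hδ0, ?_⟩
  filter_upwards [hδ, (Filter.eventually_all_finite hD).2 fun d hd ↦
    eventually_section_div_mem k hσ (hfg d hd) (hg0 d hd)] with R ⟨O, hO⟩ hR
  exact ⟨O, hO, fun d hd ↦ (hO.hasUnitPart _ (Or.inl ⟨d, hd, rfl⟩)).exists_eq_mul
    (hO.hasUnitPart _ (Or.inr ⟨d, hd, rfl⟩)) hO.isLocalCompleteIntersection hσ (hg0 d hd)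
    (hO.le (hR d hd))⟩

end ExistsIsAdapted

section Fractions

variable {R E L : Type*} [CommRing R]

theorem exists_C_mul_map_eq_mul_map [CommRing E] [IsDomain R] [Algebra R E] [IsFractionRing R E]
    {P : E[X]} {p h : R[X]} (hp : P ∣ p.map (algebraMap R E))
    (hh : IsCoprime P (h.map (algebraMap R E))) :
    ∃ β : R, β ≠ 0 ∧ ∃ e e' : R[X], C (algebraMap R E β) * p.map (algebraMap R E) =
      P * (e * h + e' * p).map (algebraMap R E) := by
  obtain ⟨r, hr⟩ := hp
  obtain ⟨s, t, hst⟩ := hh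
  obtain ⟨b, hb, hbe⟩ := IsLocalization.integerNormalization_spec (nonZeroDivisors R) (t * r)
  obtain ⟨b', hb', hbe'⟩ := IsLocalization.integerNormalization_spec (nonZeroDivisors R) s
  rw [Algebra.smul_def, Polynomial.algebraMap_apply] at hbe hbe'
  refine ⟨b * b', mul_ne_zero (nonZeroDivisors.ne_zero hb) (nonZeroDivisors.ne_zero hb'),
    C b' * IsLocalization.integerNormalization (nonZeroDivisors R) (t * r),
    C b * IsLocalization.integerNormalization (nonZeroDivisors R) s, ?_⟩
  simp only [Polynomial.map_add, Polynomial.map_mul, Polynomial.map_C, hbe, hbe', map_mul]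
  linear_combination C (algebraMap R E b) * C (algebraMap R E b') *
    (t * h.map (algebraMap R E) * hr - p.map (algebraMap R E) * hst)

theorem exists_map_lift_eq [Field L] [IsDomain R] {ℓ : R →+* L} (hℓ : Function.Injective ℓ)
    {P : L[X]} (hP : ∀ i, ∃ r s : R, s ≠ 0 ∧ P.coeff i * ℓ s = ℓ r) :
    ∃ Q : (FractionRing R)[X], Q.map (IsFractionRing.lift hℓ) = P := by
  refine (mem_lifts _).1 ((lifts_iff_coeff_lifts P).2 fun i ↦ ?_)
  obtain ⟨r, s, hs, hrs⟩ := hP i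
  refine ⟨algebraMap R (FractionRing R) r / algebraMap R (FractionRing R) s, ?_⟩
  rw [map_div₀, IsFractionRing.lift_algebraMap, IsFractionRing.lift_algebraMap,
    div_eq_iff ((map_ne_zero_iff ℓ hℓ).2 hs), hrs]

theorem exists_C_mul_map_eq_mul_map_of_irreducible [Field L] [IsDomain R] {ℓ : R →+* L}
    (hℓ : Function.Injective ℓ) {P : L[X]} (hirr : Irreducible P)
    (hP : ∀ i, ∃ r s : R, s ≠ 0 ∧ P.coeff i * ℓ s = ℓ r) {p h : R[X]} (hp : P ∣ p.map ℓ)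
    (hh : ¬ P ∣ h.map ℓ) :
    ∃ β : R, β ≠ 0 ∧ ∃ e e' : R[X], C (ℓ β) * p.map ℓ = P * (e * h + e' * p).map ℓ := by
  obtain ⟨Q, rfl⟩ := exists_map_lift_eq hℓ hP
  have hcomp : (IsFractionRing.lift hℓ).comp (algebraMap R (FractionRing R)) = ℓ :=
    RingHom.ext (IsFractionRing.lift_algebraMap hℓ)
  have hmap (q : R[X]) : (q.map (algebraMap R (FractionRing R))).map (IsFractionRing.lift hℓ) =
      q.map ℓ := by rw [Polynomial.map_map, hcomp]
  have hcop := hirr.coprime_iff_not_dvd.2 hh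
  rw [← hmap, isCoprime_map] at hcop
  rw [← hmap, map_dvd_map'] at hp
  obtain ⟨β, hβ, e, e', hee'⟩ := exists_C_mul_map_eq_mul_map hp hcop
  refine ⟨β, hβ, e, e', ?_⟩
  simpa only [Polynomial.map_mul, Polynomial.map_C, hmap, IsFractionRing.lift_algebraMap]
    using congrArg (Polynomial.map (IsFractionRing.lift hℓ)) hee'

end Fractions

section AlgebraicCase

variable {k L Λ M : Type*} [Field k] [Field L] [CommRing Λ] [Algebra k Λ] [Algebra L Λ]
  [LinearOrderedCommGroupWithZero M]

theorem eventually_exists_fraction (k : Type*) [Field k] [Algebra k Λ] (v : Valuation Λ M)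
    (a : L) : ∀ᶠ R : Subalgebra k Λ in baseFilter k L v,
      ∃ r s : R, s ≠ 0 ∧ algebraMap L Λ a * s = r := by
  have : Nontrivial Λ := ⟨0, 1, fun h ↦ by simpa using congrArg v h⟩
  obtain h | h := le_total (v (algebraMap L Λ a)) 1
  · filter_upwards [eventually_algebraMap_mem k h] with R hR
    exact ⟨⟨_, hR⟩, 1, one_ne_zero, mul_one _⟩
  · have ha : a ≠ 0 := by
      rintro rfl
      simp at h
    have hinv : v (algebraMap L Λ a⁻¹) ≤ 1 :=
      (map_inv₀ (v.comap (algebraMap L Λ)) a).trans_le (inv_le_one_of_one_le₀ h)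
    filter_upwards [eventually_algebraMap_mem k hinv] with R hR
    refine ⟨1, ⟨_, hR⟩, Subtype.coe_ne_coe.1 (by simpa using ha), ?_⟩
    rw [← map_mul, mul_inv_cancel₀ ha, map_one, OneMemClass.coe_one]

theorem eventually_forall_coeff_exists_fraction (k : Type*) [Field k] [Algebra k Λ]
    (v : Valuation Λ M) (P : L[X]) : ∀ᶠ R : Subalgebra k Λ in baseFilter k L v,
      ∀ i, ∃ r s : R, s ≠ 0 ∧ algebraMap L Λ (P.coeff i) * s = r := by
  have hev : ∀ᶠ R : Subalgebra k Λ in baseFilter k L v, ∀ i ∈ P.support,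
      ∃ r s : R, s ≠ 0 ∧ algebraMap L Λ (P.coeff i) * s = r :=
    (Filter.eventually_all_finset _).2 fun i _ ↦ eventually_exists_fraction k v _
  filter_upwards [hev, eventually_exists_fraction k v (0 : L)] with R hR hR0 i
  by_cases hi : i ∈ P.support
  · exact hR i hi
  · rwa [notMem_support_iff.1 hi]

/-- An element `b` of valuation zero satisfies `β * b = F * u` for some nonzero `β` of `R`, and
`β` divides `u` because `F` is regular modulo `β`. -/
theorem dvd_of_valuation_eq_zero [IsDomain Λ] {v : Valuation Λ M} {Y : Λ} {R O : Subalgebra k Λ}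
    (hRO : R ≤ O) (hY : Y ∈ O) (hfrac : O ≤ valFrac v (adjoinElem R Y))
    (hR : (R : Set Λ) ⊆ Set.range (algebraMap L Λ)) {P : L[X]} (hirr : Irreducible P)
    (hdvd : ∀ f : L[X], v (aeval Y f) = 0 ↔ P ∣ f)
    (hcoeff : ∀ i, ∃ r s : R, s ≠ 0 ∧ algebraMap L Λ (P.coeff i) * s = r) {F : O}
    (hF : aeval Y P = F) (hreg : IsRelativelyRegular (inclusion hRO).toRingHom F) {b : O}
    (hb : v b = 0) : F ∣ b := by
  obtain ⟨ℓ, hℓ⟩ := exists_ringHom_of_subset_range_algebraMap hR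
  have hℓinj := injective_of_algebraMap_apply_eq hℓ
  have hfracℓ (i : ℕ) : ∃ r s : R, s ≠ 0 ∧ P.coeff i * ℓ s = ℓ r := by
    obtain ⟨r, s, hs, hrs⟩ := hcoeff i
    exact ⟨r, s, hs, (algebraMap L Λ).injective (by rw [map_mul, hℓ, hℓ, hrs])⟩
  obtain ⟨_, hh, hvh, hp⟩ := mem_valFrac_iff.1 (hfrac b.2)
  obtain ⟨h, rfl⟩ := mem_adjoinElem_iff.1 hh
  obtain ⟨p, hp⟩ := mem_adjoinElem_iff.1 hp
  obtain ⟨β, hβ, e, e', hee'⟩ := exists_C_mul_map_eq_mul_map_of_irreducible hℓinj hirr hfracℓ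
    (p := p) (h := h)
    (by rw [← hdvd, aeval_map_of_algebraMap_apply_eq hℓ, hp, map_mul, hb, mul_zero])
    (by rwa [← hdvd, aeval_map_of_algebraMap_apply_eq hℓ])
  have haev (q : R[X]) : aeval Y q ∈ O := adjoinElem_le hRO hY (mem_adjoinElem_iff.2 ⟨q, rfl⟩)
  set u : O := ⟨aeval Y e, haev e⟩ + ⟨aeval Y e', haev e'⟩ * b
  have hβb : (inclusion hRO).toRingHom β * b = F * u := by
    have h0 : aeval Y h ≠ 0 := fun h0 ↦ hvh (by rw [h0, map_zero])
    have hY := congrArg (aeval Y) hee'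
    simp only [map_mul, aeval_C, aeval_map_of_algebraMap_apply_eq hℓ, hF, map_add, hp, hℓ] at hY
    refine Subtype.ext (mul_left_cancel₀ h0 ?_)
    change aeval Y h * (β * b) = aeval Y h * (F * (aeval Y e + aeval Y e' * b))
    linear_combination hY
  obtain ⟨u', hu'⟩ := hreg.dvd_of_dvd_mul ⟨b, hβb.symm⟩
  have hβ0 : (inclusion hRO).toRingHom β ≠ 0 :=
    (map_ne_zero_iff _ (Subalgebra.inclusion_injective hRO)).2 hβ
  refine ⟨u', mul_left_cancel₀ hβ0 ?_⟩
  rw [hβb, hu', mul_left_comm]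

end AlgebraicCase

section ForallFinite

variable {k L Λ K M : Type*} [Field k] [Field L] [CommRing Λ] [Field K] [Algebra k L]
  [Algebra k Λ] [Algebra L Λ] [Algebra k K] [Algebra L K] [IsScalarTower k L K]
  [LinearOrderedCommGroupWithZero M]

/-- Every finite subset of the valuation ring of `v` lies in a local complete intersection. -/
def HasLocalCompleteIntersections (k : Type*) [Field k] [Algebra k L] (v : Valuation L M) : Prop :=
  ∀ D : Set L, D.Finite → (∀ d ∈ D, v d ≤ 1) →
    ∃ O : Subalgebra k L, IsLocalCompleteIntersection v O ∧ D ⊆ O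

theorem HasLocalCompleteIntersections.exists_of_eventually [IsScalarTower k L Λ]
    {v : Valuation Λ M} (h : HasLocalCompleteIntersections k (v.comap (algebraMap L Λ)))
    {p : Subalgebra k Λ → Prop} (hp : ∀ᶠ R in baseFilter k L v, p R) : ∃ R, p R := by
  have : Nontrivial Λ := ⟨0, 1, fun h ↦ by simpa using congrArg v h⟩
  obtain ⟨W, hW, hW1, hWp⟩ := hp
  obtain ⟨O, hO, hWO⟩ := h W hW hW1
  refine ⟨_, hWp (O.map (IsScalarTower.toAlgHom k L Λ))
    (hO.map_of_injective (fun x ↦ rfl) (algebraMap L Λ).injective) ?_ (Set.image_mono hWO)⟩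
  rintro _ ⟨x, -, rfl⟩
  exact ⟨x, rfl⟩

variable {w : Valuation K M} {σ : M →*₀ L}

theorem HasLocalCompleteIntersections.of_transcendental
    (h : HasLocalCompleteIntersections k (w.comap (algebraMap L K)))
    (hσ : ∀ γ, w (algebraMap L K (σ γ)) = γ) {y : K} (hy : w y ≤ 1) (htr : Transcendental L y)
    (hK : IntermediateField.adjoin L {y} = ⊤) : HasLocalCompleteIntersections k w := by
  intro D hD hD1
  have hdiv (d : K) : ∃ f g : L[X], aeval y g ≠ 0 ∧ aeval y f = aeval y g * d := by
    obtain ⟨f, g, rfl⟩ :=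
      (IntermediateField.mem_adjoin_simple_iff L d).1 (hK ▸ IntermediateField.mem_top)
    by_cases hg : aeval y g = 0
    · exact ⟨0, 1, by simp, by simp [hg]⟩
    · exact ⟨f, g, hg, (mul_div_cancel₀ _ hg).symm⟩
  choose f g hg hfg using hdiv
  obtain ⟨n, hn⟩ := (hD.image fun d ↦ max (f d).natDegree (g d).natDegree).bddAbove
  have hmax (d) (hd : d ∈ D) : max (f d).natDegree (g d).natDegree ≤ n := hn ⟨d, hd, rfl⟩
  obtain ⟨S, δ, -, hev⟩ := exists_eventually_isAdapted_forall_eq_mul (k := k) (v := w) (Y := y)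
    (fun a ha ↦ (w.ne_zero_iff.1 ha).isUnit) hσ (transcendental_iff_injective.1 htr) hy
    (fun q hq _ ↦ w.ne_zero_iff.2 fun h0 ↦ hq (transcendental_iff.1 htr q h0))
    Set.finite_empty (by simp) hD (fun d hd ↦ le_of_max_le_left (hmax d hd))
    (fun d hd ↦ le_of_max_le_right (hmax d hd)) (fun d _ ↦ w.ne_zero_iff.2 (hg d))
    fun d hd ↦ by
      rw [hfg, map_mul]
      exact mul_le_of_le_one_right' (hD1 d hd)
  obtain ⟨R, O, hO, hDO⟩ := h.exists_of_eventually hev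
  refine ⟨O, hO.isLocalCompleteIntersection, fun d hd ↦ ?_⟩
  obtain ⟨c, hc, hfc⟩ := hDO d hd
  rwa [mul_left_cancel₀ (hg d) ((hfg d).symm.trans hfc)]

theorem exists_natDegree_lt_natDegree_minpoly_aeval_eq {y : K} (hy : IsIntegral L y)
    (hK : IntermediateField.adjoin L {y} = ⊤) (d : K) :
    ∃ f : L[X], f.natDegree < (minpoly L y).natDegree ∧ d = aeval y f := by
  have htop : Algebra.adjoin L {y} = ⊤ := by
    rw [← IntermediateField.adjoin_simple_toSubalgebra_of_isAlgebraic hy.isAlgebraic, hK,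
      IntermediateField.top_toSubalgebra]
  simpa using (PowerBasis.ofAdjoinEqTop' hy htop).exists_eq_aeval d

theorem IsAdapted.isLocalCompleteIntersection_map [IsDomain Λ] [IsScalarTower k L Λ]
    {ψ : Λ →ₐ[L] K} {Y : Λ}
    (hY : Function.Injective (aeval Y : L[X] →ₐ[L] Λ)) (halg : IsIntegral L (ψ Y))
    {R O : Subalgebra k Λ} {S : Set L[X]} {δ : L[X] → M}
    (hO : IsAdapted (w.comap ψ.toRingHom) σ Y R O S {minpoly L (ψ Y)} δ)
    (hδ : δ (minpoly L (ψ Y)) ≠ 0) (hR : (R : Set Λ) ⊆ Set.range (algebraMap L Λ))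
    (hcoeff : ∀ i, ∃ r s : R, s ≠ 0 ∧ algebraMap L Λ
      ((C (σ (δ (minpoly L (ψ Y))))⁻¹ * minpoly L (ψ Y)).coeff i) * s = r) :
    IsLocalCompleteIntersection w (O.map (ψ.restrictScalars k)) := by
  obtain ⟨F, hF, hreg⟩ := hO.regular _ rfl
  set P := minpoly L (ψ Y) with hP
  set a := σ (δ P)
  have ha0 : a ≠ 0 := (map_ne_zero σ).2 hδ
  have hCa : IsUnit (C a⁻¹) := isUnit_C.2 (inv_ne_zero ha0).isUnit
  have hF' : aeval Y (C a⁻¹ * P) = F := by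
    rw [map_mul, aeval_C, hF, ← mul_assoc, ← map_mul, inv_mul_cancel₀ ha0, map_one, one_mul]
  have hψ (q : L[X]) : ψ (aeval Y q) = aeval (ψ Y) q := (aeval_algHom_apply ψ Y q).symm
  have hdvd (q : L[X]) : w (ψ (aeval Y q)) = 0 ↔ C a⁻¹ * P ∣ q := by
    rw [hCa.mul_left_dvd, hP, minpoly.dvd_iff, ← hψ, w.zero_iff]
  refine hO.isLocalCompleteIntersection.map_of_ker_eq_span (ψ := ψ.restrictScalars k)
    (fun x ↦ rfl) (F := F) ?_ ?_
  · rintro rfl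
    refine (mul_ne_zero hCa.ne_zero (minpoly.ne_zero halg)) (hY (hF'.trans ?_))
    rw [map_zero, ZeroMemClass.coe_zero]
  · refine le_antisymm (fun b hb ↦ Ideal.mem_span_singleton.2 ?_)
      ((Ideal.span_singleton_le_iff_mem _).2 ?_)
    · refine dvd_of_valuation_eq_zero hO.le hO.mem hO.le_valFrac hR ?_ hdvd hcoeff hF' hreg ?_
      · exact (irreducible_isUnit_mul hCa).2 (minpoly.irreducible halg)
      · exact w.zero_iff.2 hb
    · exact w.zero_iff.1 ((congrArg (w ∘ ψ) hF').symm.trans ((hdvd _).2 dvd_rfl))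

theorem HasLocalCompleteIntersections.of_isIntegral_of_algHom [IsDomain Λ] [IsScalarTower k L Λ]
    (h : HasLocalCompleteIntersections k (w.comap (algebraMap L K)))
    (hσ : ∀ γ, w (algebraMap L K (σ γ)) = γ) {ψ : Λ →ₐ[L] K} (hψ : ∀ a, ψ a ≠ 0 → IsUnit a) {Y : Λ}
    (hY : Function.Injective (aeval Y : L[X] →ₐ[L] Λ)) (hwY : w (ψ Y) ≤ 1)
    (halg : IsIntegral L (ψ Y)) (hK : IntermediateField.adjoin L {ψ Y} = ⊤) :
    HasLocalCompleteIntersections k w := by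
  intro D hD hD1
  set P := minpoly L (ψ Y)
  set v := w.comap ψ.toRingHom
  have haev (q : L[X]) : v (aeval Y q) = w (aeval (ψ Y) q) :=
    congrArg w (aeval_algHom_apply ψ Y q).symm
  have hvL : v.comap (algebraMap L Λ) = w.comap (algebraMap L K) :=
    Valuation.ext fun x ↦ congrArg w (ψ.commutes x)
  have hPmin (q : L[X]) (hq : q ≠ 0) (hqP : q.natDegree ≤ P.natDegree - 1) :
      v (aeval Y q) ≠ 0 := by
    rw [haev, w.ne_zero_iff]
    intro h0
    have hle : P.natDegree ≤ q.natDegree := natDegree_le_of_dvd (minpoly.dvd L (ψ Y) h0) hq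
    have hpos : 0 < P.natDegree := minpoly.natDegree_pos halg
    omega
  choose f hfP hf using exists_natDegree_lt_natDegree_minpoly_aeval_eq halg hK
  obtain ⟨S, δ, hδ, hev⟩ := exists_eventually_isAdapted_forall_eq_mul (k := k) (v := v) (Y := Y)
    (n := P.natDegree - 1) (G := {P}) (g := 1) (fun a ha ↦ hψ a (w.ne_zero_iff.1 ha))
    (fun γ ↦ (congrArg w (ψ.commutes _)).trans (hσ γ)) hY hwY hPmin
    (Set.finite_singleton P) (by simpa using minpoly.ne_zero halg) hD
    (fun d _ ↦ Nat.le_sub_one_of_lt (hfP d)) (by simp) (by simp)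
    (fun d hd ↦ by simpa [haev, ← hf] using hD1 d hd)
  obtain ⟨R, ⟨O, hO, hDO⟩, hRc, hRr⟩ := (hvL ▸ h).exists_of_eventually
    (hev.and ((eventually_forall_coeff_exists_fraction k v (C (σ (δ P))⁻¹ * P)).and
      (eventually_subset_range_algebraMap k L v)))
  refine ⟨_, hO.isLocalCompleteIntersection_map hY halg (hδ P rfl) hRr hRc, fun d hd ↦ ?_⟩
  obtain ⟨c, hc, hfc⟩ := hDO d hd
  refine ⟨c, hc, ?_⟩
  rw [hf d, aeval_algHom_apply, hfc]
  simp

theorem HasLocalCompleteIntersections.of_isIntegral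
    (h : HasLocalCompleteIntersections k (w.comap (algebraMap L K)))
    (hσ : ∀ γ, w (algebraMap L K (σ γ)) = γ) {y : K} (hy : w y ≤ 1) (halg : IsIntegral L y)
    (hK : IntermediateField.adjoin L {y} = ⊤) : HasLocalCompleteIntersections k w := by
  let P : Ideal L[X] := RingHom.ker (aeval y : L[X] →ₐ[L] K)
  have : P.IsPrime := RingHom.ker_isPrime _
  have hmem (q : L[X]) : aeval y q = 0 ↔ q ∈ P := Iff.rfl
  clear_value P
  let ψ : Localization.AtPrime P →ₐ[L] K := IsLocalization.liftAlgHom (M := P.primeCompl)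
    (f := aeval y) fun q ↦ isUnit_iff_ne_zero.2 fun h ↦ q.2 ((hmem _).1 h)
  have hψ (q : L[X]) : ψ (algebraMap _ _ q) = aeval y q := IsLocalization.lift_eq _ q
  have hψX : ψ (algebraMap L[X] _ X) = y := by rw [hψ, aeval_X]
  have : IsDomain (Localization.AtPrime P) := inferInstance
  refine h.of_isIntegral_of_algHom hσ (ψ := ψ) (Y := algebraMap L[X] _ X) (fun a ha ↦ ?_)
    (fun q q' hq ↦ ?_) (by rwa [hψX]) (by rwa [hψX]) (by rwa [hψX])
  · obtain ⟨q, t, rfl⟩ := IsLocalization.exists_mk'_eq P.primeCompl a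
    rw [IsLocalization.AtPrime.isUnit_mk'_iff (Localization.AtPrime P) P]
    intro hq
    have hmul := congrArg ψ (IsLocalization.mk'_spec (Localization.AtPrime P) q t)
    rw [map_mul, hψ, hψ, (hmem q).2 hq] at hmul
    exact ha ((mul_eq_zero.1 hmul).resolve_right fun ht ↦ t.2 ((hmem _).1 ht))
  · rw [aeval_algebraMap_apply, aeval_algebraMap_apply, aeval_X_left_apply,
      aeval_X_left_apply] at hq
    exact IsLocalization.injective _ P.primeCompl_le_nonZeroDivisors hq

theorem HasLocalCompleteIntersections.of_adjoin_eq_top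
    (h : HasLocalCompleteIntersections k (w.comap (algebraMap L K)))
    (hσ : ∀ γ, w (algebraMap L K (σ γ)) = γ) {y : K} (hy : w y ≤ 1)
    (hK : IntermediateField.adjoin L {y} = ⊤) : HasLocalCompleteIntersections k w := by
  by_cases htr : Transcendental L y
  · exact h.of_transcendental hσ hy htr hK
  · exact h.of_isIntegral hσ hy (not_not.1 htr).isIntegral hK

end ForallFinite

/-! ### Perron's algorithm -/

section Perron

open Finset Function

variable {ι Γ : Type*} [AddCommGroup Γ]

theorem sum_update_add_smul_update_sub [Fintype ι] [DecidableEq ι] (a : ι → Γ) (c : ι → ℤ)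
    {p q : ι} (hpq : p ≠ q) :
    ∑ i, update c q (c q + c p) i • update a p (a p - a q) i = ∑ i, c i • a i := by
  have hq : q ∈ univ.erase p := by simp [hpq.symm]
  rw [← add_sum_erase univ _ (mem_univ p), ← add_sum_erase _ _ hq,
    ← add_sum_erase univ _ (mem_univ p), ← add_sum_erase _ _ hq]
  have hrest : ∀ i ∈ (univ.erase p).erase q,
      update c q (c q + c p) i • update a p (a p - a q) i = c i • a i := by
    intro i hi
    simp only [mem_erase, mem_univ, and_true] at hi
    rw [update_of_ne hi.1, update_of_ne hi.2]
  rw [Finset.sum_congr rfl hrest]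
  simp only [update_self, update_of_ne hpq, update_of_ne hpq.symm, smul_sub, add_smul]
  abel

theorem range_subset_closure_range_update_sub [DecidableEq ι] (a : ι → Γ) {p q : ι}
    (hpq : p ≠ q) :
    Set.range a ⊆ AddSubmonoid.closure (Set.range (update a p (a p - a q))) := by
  rintro _ ⟨i, rfl⟩
  have hmem (j : ι) (hj : j ≠ p) :
      a j ∈ AddSubmonoid.closure (Set.range (update a p (a p - a q))) :=
    AddSubmonoid.subset_closure ⟨j, update_of_ne hj _ _⟩
  obtain rfl | hi := eq_or_ne i p
  · have h : a i - a q ∈ AddSubmonoid.closure (Set.range (update a i (a i - a q))) :=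
      AddSubmonoid.subset_closure ⟨i, update_self _ _ _⟩
    have := add_mem h (hmem q hpq.symm)
    rwa [sub_add_cancel] at this
  · exact hmem i hi

theorem abs_add_lt_of_mul_neg {x y : ℤ} (hxy : x * y < 0) (hle : |x| ≤ |y|) :
    |x + y| < |y| := by
  refine sq_lt_sq.1 ?_
  have hx : 0 < |x| := abs_pos.2 (left_ne_zero_of_mul hxy.ne)
  have hxx : |x| * |x| ≤ |x| * |y| := mul_le_mul_of_nonneg_left hle hx.le
  rw [abs_mul_abs_self, ← abs_mul, abs_of_neg hxy] at hxx
  nlinarith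

theorem add_mul_self_nonneg_of_abs_le {x y : ℤ} (hle : |x| ≤ |y|) : 0 ≤ (x + y) * y := by
  have h : |x * y| ≤ y * y := by
    rw [abs_mul, ← abs_mul_abs_self y]
    exact mul_le_mul_of_nonneg_right hle (abs_nonneg y)
  linarith [neg_le_of_abs_le h, add_mul x y y]

theorem update_sub_pos [LinearOrder Γ] [IsOrderedAddMonoid Γ] [DecidableEq ι]
    {a : ι → Γ} (ha : ∀ l, 0 < a l) {i j : ι} (hij : a i < a j) (l : ι) :
    0 < update a j (a j - a i) l := by
  obtain rfl | hl := eq_or_ne l j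
  · simpa using hij
  · simpa [update_of_ne hl] using ha l

variable [LinearOrder Γ] [Fintype ι]

/-- `c` is a nontrivial integral relation between the positive elements `a j`, and `i` is the
index of a coefficient of largest absolute value. -/
structure IsMaxRelation (a : ι → Γ) (c : ι → ℤ) (i : ι) : Prop where
  pos : ∀ j, 0 < a j
  sum_eq_zero : ∑ j, c j • a j = 0
  ne_zero : c i ≠ 0
  abs_le : ∀ j, |c j| ≤ |c i|

/-- The complexity of a relation, which drops with each subtraction in Perron's algorithm: the
largest absolute value of a coefficient, then the number of coefficients attaining it, then the
number of coefficients whose sign is opposite to that of `c i`. -/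
def relationComplexity (c : ι → ℤ) (i : ι) : ℕ ×ₗ ℕ ×ₗ ℕ :=
  toLex ((c i).natAbs, toLex (#{l | |c l| = |c i|}, #{l | c l * c i < 0}))

variable {a : ι → Γ} {c : ι → ℤ} {i j : ι}

theorem relationComplexity_update_lt [DecidableEq ι] (hle : |c j| ≤ |c i|) (hj : c j * c i < 0)
    (hji : j ≠ i) :
    relationComplexity (update c j (c j + c i)) i < relationComplexity c i := by
  set c' := update c j (c j + c i)
  have hc'j : c' j = c j + c i := update_self _ _ _
  have hc' {l : ι} (hl : l ≠ j) : c' l = c l := update_of_ne hl _ _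
  have hcard : #{l | |c' l| = |c i|} ≤ #{l | |c l| = |c i|} := by
    refine card_le_card fun l hl ↦ ?_
    rw [mem_filter_univ] at hl ⊢
    obtain rfl | hlj := eq_or_ne l j
    · exact absurd (hc'j ▸ hl) (abs_add_lt_of_mul_neg hj hle).ne
    · rwa [hc' hlj] at hl
  rw [relationComplexity, relationComplexity, hc' hji.symm]
  refine Prod.Lex.right _ ?_
  obtain hcard | hcard := hcard.lt_or_eq
  · exact Prod.Lex.left _ _ hcard
  rw [hcard]
  refine Prod.Lex.right _ (card_lt_card ?_)
  have hj' : ¬ c' j * c i < 0 := by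
    rw [hc'j, not_lt]
    exact add_mul_self_nonneg_of_abs_le hle
  refine (ssubset_iff_of_subset fun l hl ↦ ?_).2 ⟨j, by simpa using hj, by simpa using hj'⟩
  rw [mem_filter_univ] at hl ⊢
  obtain rfl | hlj := eq_or_ne l j
  · exact hj
  · rwa [hc' hlj] at hl

namespace IsMaxRelation

theorem exists_of_ne_zero (ha : ∀ l, 0 < a l) (hc : ∑ l, c l • a l = 0) (hj : c j ≠ 0) :
    ∃ i, IsMaxRelation a c i := by
  obtain ⟨i, -, hi⟩ := exists_max_image univ (fun l ↦ |c l|) ⟨j, mem_univ j⟩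
  exact ⟨i, ha, hc, abs_pos.1 ((abs_pos.2 hj).trans_le (hi j (mem_univ j))),
    fun l ↦ hi l (mem_univ l)⟩

variable [IsOrderedAddMonoid Γ] (h : IsMaxRelation a c i)
include h

theorem exists_mul_neg : ∃ j, c j * c i < 0 := by
  by_contra! hnonneg
  have hsum : ∑ j, (c j * c i) • a j = 0 := by
    simp only [mul_comm _ (c i), mul_smul, ← smul_sum, h.sum_eq_zero, smul_zero]
  have hi := (sum_eq_zero_iff_of_nonneg fun j _ ↦ zsmul_nonneg (h.pos j).le (hnonneg j)).1 hsum i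
    (mem_univ i)
  exact (zsmul_pos (h.pos i) (mul_self_pos.2 h.ne_zero)).ne' hi

theorem exists_relationComplexity_lt_of_lt [DecidableEq ι] (hj : c j * c i < 0)
    (hij : a i < a j) : ∃ c' i', IsMaxRelation (update a j (a j - a i)) c' i' ∧
      relationComplexity c' i' < relationComplexity c i := by
  have hji : j ≠ i := ne_of_apply_ne a hij.ne'
  set c' := update c i (c i + c j)
  have habs : |c' i| < |c i| := by
    have hc'i : c' i = c j + c i := (update_self _ _ _).trans (add_comm _ _)
    exact hc'i ▸ abs_add_lt_of_mul_neg hj (h.abs_le j)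
  have hc' {l : ι} (hl : l ≠ i) : c' l = c l := update_of_ne hl _ _
  obtain ⟨i', h'⟩ := exists_of_ne_zero (c := c') (j := j) (update_sub_pos h.pos hij)
    ((sum_update_add_smul_update_sub a c hji).trans h.sum_eq_zero)
    (by rw [hc' hji]; exact left_ne_zero_of_mul hj.ne)
  have hle : |c' i'| ≤ |c i| := by
    obtain rfl | hi' := eq_or_ne i' i
    · exact habs.le
    · exact (hc' hi').symm ▸ h.abs_le i'
  refine ⟨c', i', h', ?_⟩
  obtain hlt | heq := hle.lt_or_eq
  · exact Prod.Lex.left _ _ (by zify; exact hlt)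
  have hnatAbs : (c' i').natAbs = (c i).natAbs := by zify; exact heq
  rw [relationComplexity, relationComplexity, hnatAbs, heq]
  refine Prod.Lex.right _ (Prod.Lex.left _ _ (card_lt_card ?_))
  refine (ssubset_iff_of_subset fun l hl ↦ ?_).2 ⟨i, by simp, by simpa using habs.ne⟩
  rw [mem_filter_univ] at hl ⊢
  obtain rfl | hli := eq_or_ne l i
  · rfl
  · rwa [hc' hli] at hl

theorem update_of_gt [DecidableEq ι] (hj : c j * c i < 0) (hij : a j < a i) :
    IsMaxRelation (update a i (a i - a j)) (update c j (c j + c i)) i := by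
  have hij' : i ≠ j := ne_of_apply_ne a hij.ne'
  have hci : update c j (c j + c i) i = c i := update_of_ne hij' _ _
  refine ⟨update_sub_pos h.pos hij,
    (sum_update_add_smul_update_sub a c hij').trans h.sum_eq_zero, hci.symm ▸ h.ne_zero,
    fun l ↦ ?_⟩
  rw [hci]
  obtain rfl | hl := eq_or_ne l j
  · rw [update_self]
    exact (abs_add_lt_of_mul_neg hj (h.abs_le l)).le
  · rw [update_of_ne hl]
    exact h.abs_le l

theorem exists_range_subset_closure_image_compl : ∃ (a' : ι → Γ) (j : ι), (∀ l, 0 < a' l) ∧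
    Set.range a ⊆ AddSubmonoid.closure (a' '' {j}ᶜ) := by
  classical
  induction hm : relationComplexity c i using WellFoundedLT.induction generalizing a c i with
  | _ m ih =>
  subst hm
  obtain ⟨j, hj⟩ := h.exists_mul_neg
  have hji : j ≠ i := fun hji ↦ (mul_self_nonneg (c i)).not_gt (hji ▸ hj)
  obtain hlt | heq | hgt := lt_trichotomy (a i) (a j)
  · obtain ⟨c', i', h', hc'⟩ := h.exists_relationComplexity_lt_of_lt hj hlt
    obtain ⟨b, l, hb, hab⟩ := ih _ hc' h' rfl
    exact ⟨b, l, hb, (range_subset_closure_range_update_sub a hji).trans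
      (AddSubmonoid.closure_le.2 hab)⟩
  · refine ⟨a, j, h.pos, ?_⟩
    rintro _ ⟨l, rfl⟩
    obtain rfl | hl := eq_or_ne l j
    · exact AddSubmonoid.subset_closure ⟨i, hji.symm, heq⟩
    · exact AddSubmonoid.subset_closure ⟨l, hl, rfl⟩
  · obtain ⟨b, l, hb, hab⟩ := ih _ (relationComplexity_update_lt (h.abs_le j) hj hji)
      (h.update_of_gt hj hgt) rfl
    exact ⟨b, l, hb, (range_subset_closure_range_update_sub a hji.symm).trans
      (AddSubmonoid.closure_le.2 hab)⟩

end IsMaxRelation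

theorem exists_finset_linearIndependent_subset_closure [IsOrderedAddMonoid Γ] (T : Finset Γ)
    (hT : ∀ t ∈ T, 0 < t) :
    ∃ T' : Finset Γ, (∀ t ∈ T', 0 < t) ∧ LinearIndependent ℤ (Subtype.val : T' → Γ) ∧
      (T : Set Γ) ⊆ AddSubmonoid.closure (T' : Set Γ) := by
  classical
  induction hn : #T using Nat.strong_induction_on generalizing T with
  | _ n ih =>
  by_cases hli : LinearIndependent ℤ (Subtype.val : T → Γ)
  · exact ⟨T, hT, hli, AddSubmonoid.subset_closure⟩
  rw [Fintype.not_linearIndependent_iff] at hli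
  obtain ⟨c, hc, i₀, hi₀⟩ := hli
  obtain ⟨i, hi⟩ := IsMaxRelation.exists_of_ne_zero (fun t : T ↦ hT t t.2) hc hi₀
  obtain ⟨a, j, ha, hTa⟩ := hi.exists_range_subset_closure_image_compl
  have hcard : #((univ.erase j).image a) < n := by
    rw [← hn, ← Fintype.card_coe T, ← card_univ]
    exact card_image_le.trans_lt (card_erase_lt_of_mem (mem_univ j))
  obtain ⟨T', hT', hli', hsub⟩ := ih _ hcard ((univ.erase j).image a)
    (forall_mem_image.2 fun l _ ↦ ha l) rfl
  refine ⟨T', hT', hli', ?_⟩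
  rw [Subtype.range_val] at hTa
  refine hTa.trans (AddSubmonoid.closure_le.2 ?_)
  convert hsub using 1
  ext
  simp

end Perron

/-! ### The field generated by the monomials -/

section Monomials

variable {k L M : Type*} [Field k] [Field L] [Algebra k L] [LinearOrderedCommGroupWithZero M]
  {w : Valuation L M}

theorem isTrivialOn_of_forall_le_one (hk : ∀ c : k, w (algebraMap k L c) ≤ 1) :
    w.IsTrivialOn k where
  eq_one c hc := by
    have h : w (algebraMap k L c) * w (algebraMap k L c⁻¹) = 1 := by
      rw [← map_mul, ← map_mul, mul_inv_cancel₀ hc, map_one, map_one]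
    exact eq_one_of_one_le_mul_left (hk c) (hk c⁻¹) h.ge

theorem valuation_le_valuation_sum_of_injOn {R ι : Type*} [Ring R] (v : Valuation R M)
    {s : Finset ι} {f : ι → R} (hf : Set.InjOn (fun i ↦ v (f i)) s) {i : ι} (hi : i ∈ s) :
    v (f i) ≤ v (∑ j ∈ s, f j) := by
  classical
  obtain ⟨j, hj, hmax⟩ := s.exists_max_image (fun i ↦ v (f i)) ⟨i, hi⟩
  rw [v.map_sum_eq_of_lt hj fun l hl ↦ ?_]
  · exact hmax i hi
  · obtain ⟨hl, hlj⟩ := Finset.mem_sdiff.1 hl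
    exact (hmax l hl).lt_of_ne fun h ↦ hlj (Finset.mem_singleton.2 (hf hl hj h))

theorem valuation_prod_pow_eq_linearCombination {ι : Type*} {x : ι → L} {t : ι → Additive Mˣ}
    (hx : ∀ i, w (x i) = (t i).toMul) (m : ι →₀ ℕ) :
    w (m.prod fun i e ↦ x i ^ e) = (Finsupp.linearCombination ℕ t m).toMul := by
  simp only [Finsupp.prod, map_prod, map_pow, hx, Finsupp.linearCombination_apply, Finsupp.sum,
    toMul_sum, toMul_nsmul, Units.coe_prod, Units.val_pow_eq_pow_val]

variable (k) in
theorem algebraicIndependent_of_linearIndependent_valuation [w.IsTrivialOn k] {ι : Type*}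
    {x : ι → L} {t : ι → Additive Mˣ} (hx : ∀ i, w (x i) = (t i).toMul)
    (ht : LinearIndependent ℤ t) : AlgebraicIndependent k x := by
  have htN : LinearIndependent ℕ t := ht.restrict_scalars fun a b h ↦ by simpa using h
  refine (injective_iff_map_eq_zero _).2 fun p hp ↦ by_contra fun hp0 ↦ ?_
  obtain ⟨m, hm⟩ := Finset.nonempty_iff_ne_empty.2 (mt MvPolynomial.support_eq_empty.1 hp0)
  have hterm : ∀ m ∈ p.support, w (algebraMap k L (p.coeff m) * m.prod fun i e ↦ x i ^ e) =
      (Finsupp.linearCombination ℕ t m).toMul := fun m hm ↦ by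
    rw [map_mul, Valuation.IsTrivialOn.eq_one _ (MvPolynomial.mem_support_iff.1 hm), one_mul,
      valuation_prod_pow_eq_linearCombination hx]
  have hle := valuation_le_valuation_sum_of_injOn w (s := p.support)
    (f := fun m ↦ algebraMap k L (p.coeff m) * m.prod fun i e ↦ x i ^ e)
    (fun m hm m' hm' h ↦ htN (Additive.toMul.injective (Units.ext (by
      simpa only [hterm m hm, hterm m' hm'] using h)))) hm
  have hsum : ∑ m ∈ p.support, algebraMap k L (p.coeff m) * m.prod (fun i e ↦ x i ^ e) = 0 := by
    rw [← hp, MvPolynomial.aeval_def, MvPolynomial.eval₂_eq]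
    rfl
  rw [hsum, map_zero, hterm m hm, le_zero_iff] at hle
  exact Units.ne_zero _ hle

theorem isCompleteIntersectionOfFiniteType_adjoin_range {ι : Type*} [Finite ι] {x : ι → L}
    (hx : AlgebraicIndependent k x) :
    IsCompleteIntersectionOfFiniteType k (adjoin k (Set.range x)) :=
  (IsCompleteIntersectionOfFiniteType.mvPolynomial (k := k) (Nat.card ι)).of_algEquiv
    ((MvPolynomial.renameEquiv k (Finite.equivFin ι).symm).trans hx.aevalEquiv)

theorem valuation_le_one_of_mem_adjoin [w.IsTrivialOn k] {s : Set L} (hs : ∀ x ∈ s, w x ≤ 1)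
    {a : L} (ha : a ∈ adjoin k s) : w a ≤ 1 := by
  induction ha using adjoin_induction with
  | mem x hx => exact hs x hx
  | algebraMap c => exact Valuation.IsTrivialOn.valuation_algebraMap_le_one w c
  | add x y _ _ hx hy => exact (w.map_add x y).trans (max_le hx hy)
  | mul x y _ _ hx hy => exact (map_mul w x y).trans_le (mul_le_one' hx hy)

variable {σ : M →*₀ L}

theorem section_mem_of_mem_closure {S : Type*} [SetLike S L] [SubmonoidClass S L] {A : S}
    {T : Set (Additive Mˣ)} (hT : ∀ t ∈ T, σ ((t.toMul⁻¹ : Mˣ) : M) ∈ A) {t : Additive Mˣ}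
    (ht : t ∈ AddSubmonoid.closure T) : σ ((t.toMul⁻¹ : Mˣ) : M) ∈ A := by
  induction ht using AddSubmonoid.closure_induction with
  | mem t ht => exact hT t ht
  | zero => simp
  | add s t _ _ hs ht =>
    rw [toMul_add, mul_inv, Units.val_mul, map_mul]
    exact mul_mem hs ht

variable (k) in
theorem exists_isCompleteIntersection_image_subset [w.IsTrivialOn k] (hσ : ∀ γ, w (σ γ) = γ)
    {T : Set M} (hT : T.Finite) (hT1 : ∀ γ ∈ T, γ ≤ 1) :
    ∃ A : Subalgebra k L, IsCompleteIntersectionOfFiniteType k A ∧ (∀ a ∈ A, w a ≤ 1) ∧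
      σ '' T ⊆ A := by
  let γ : Additive Mˣ → M := fun t ↦ ((t.toMul⁻¹ : Mˣ) : M)
  have hγ : Function.Injective γ :=
    Units.val_injective.comp (inv_injective.comp Additive.toMul.injective)
  obtain ⟨T', hT'0, hT', hsub⟩ := exists_finset_linearIndependent_subset_closure
    ((hT.preimage hγ.injOn).subset (Set.inter_subset_right (s := {t | 0 < t}))).toFinset
    (fun t ht ↦ ((Set.Finite.mem_toFinset _).1 ht).1)
  have hx : AlgebraicIndependent k fun t : T' ↦ σ (γ t) :=
    algebraicIndependent_of_linearIndependent_valuation k (t := -Subtype.val) (fun t ↦ hσ _) hT'.neg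
  refine ⟨_, isCompleteIntersectionOfFiniteType_adjoin_range hx, fun a ha ↦
    valuation_le_one_of_mem_adjoin ?_ ha, ?_⟩
  · rintro _ ⟨t, rfl⟩
    rw [hσ, ← Units.val_one, Units.val_le_val]
    exact inv_le_one'.2 (hT'0 t t.2).le
  · rintro _ ⟨δ, hδ, rfl⟩
    obtain rfl | h0 := eq_or_ne δ 0
    · simp
    obtain rfl | h1 := (hT1 δ hδ).eq_or_lt
    · simp
    have hγδ : γ (.ofMul (Units.mk0 δ h0)⁻¹) = δ := by simp [γ]
    rw [← hγδ]
    refine section_mem_of_mem_closure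
      (fun t ht ↦ subset_adjoin (Set.mem_range_self (⟨t, ht⟩ : T'))) (hsub ?_)
    refine (Set.Finite.mem_toFinset _).2 ⟨?_, by rwa [Set.mem_preimage, hγδ]⟩
    change 1 < (Units.mk0 δ h0)⁻¹
    rwa [one_lt_inv', ← Units.val_lt_val]

theorem exists_finite_forall_hasUnitPart_of_mem_span [w.IsTrivialOn k] (hσ : ∀ γ, w (σ γ) = γ)
    {p : L} (hp : p ∈ Submodule.span k (Set.range σ)) :
    ∃ T : Set M, T.Finite ∧ (∀ γ ∈ T, γ ≤ 1) ∧
      ∀ A : Subalgebra k L, σ '' T ⊆ A → HasUnitPart w σ A p := by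
  obtain rfl | hp0 := eq_or_ne p 0
  · exact ⟨∅, Set.finite_empty, by simp, fun A _ ↦ hasUnitPart_zero⟩
  obtain ⟨c, rfl⟩ := Finsupp.mem_span_range_iff_exists_finsupp.1 hp
  set p := c.sum fun γ a ↦ a • σ γ with hpc
  have hwp : w p ≠ 0 := w.ne_zero_iff.2 hp0
  have hval : ∀ γ ∈ c.support, w (c γ • σ γ) = γ := fun γ hγ ↦ by
    rw [Algebra.smul_def, map_mul, hσ,
      Valuation.IsTrivialOn.eq_one _ (Finsupp.mem_support_iff.1 hγ), one_mul]
  refine ⟨(· / w p) '' c.support, c.support.finite_toSet.image _, ?_, fun A hA ↦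
    ⟨∑ γ ∈ c.support, c γ • σ (γ / w p), sum_mem fun γ hγ ↦ A.smul_mem
      (hA ⟨_, ⟨γ, hγ, rfl⟩, rfl⟩) _, ?_⟩⟩
  · rintro _ ⟨γ, hγ, rfl⟩
    refine div_le_one_of_le₀ ?_ zero_le
    calc γ = w (c γ • σ γ) := (hval γ hγ).symm
      _ ≤ w p := valuation_le_valuation_sum_of_injOn w (f := fun γ ↦ c γ • σ γ)
        (fun γ hγ γ' hγ' h ↦ by simpa only [hval γ hγ, hval γ' hγ'] using h) hγ
  · rw [algebraMap_self_apply, Finset.mul_sum]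
    conv_lhs => rw [hpc, Finsupp.sum]
    refine Finset.sum_congr rfl fun γ _ ↦ ?_
    rw [mul_smul_comm, ← map_mul, mul_div_cancel₀ _ hwp]

theorem HasLocalCompleteIntersections.of_forall_exists_mem_span [w.IsTrivialOn k]
    (hσ : ∀ γ, w (σ γ) = γ)
    (hL : ∀ d : L, ∃ p ∈ Submodule.span k (Set.range σ), ∃ q ∈ Submodule.span k (Set.range σ),
      q ≠ 0 ∧ p = q * d) : HasLocalCompleteIntersections k w := by
  intro D hD hD1
  choose p hp q hq hq0 hpq using hL
  choose T hT hT1 hTp using fun d ↦ exists_finite_forall_hasUnitPart_of_mem_span hσ (hp d)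
  choose S hS hS1 hSq using fun d ↦ exists_finite_forall_hasUnitPart_of_mem_span hσ (hq d)
  obtain ⟨A, hA, hA1, hsub⟩ := exists_isCompleteIntersection_image_subset k hσ
    (T := ⋃ d ∈ D, (T d ∪ S d ∪ {w d})) (hD.biUnion fun d _ ↦
      ((hT d).union (hS d)).union (Set.finite_singleton _)) (by
      simp only [Set.mem_iUnion, Set.mem_union, Set.mem_singleton_iff]
      rintro γ ⟨d, hd, (h | h) | rfl⟩
      exacts [hT1 d _ h, hS1 d _ h, hD1 d hd])
  have hAO : A ≤ valLoc w A := le_localizationAt _ A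
  have hO := isLocalCompleteIntersection_valLoc (fun a ha ↦ (w.ne_zero_iff.1 ha).isUnit) hA1 hA
  refine ⟨valLoc w A, hO, fun d hd ↦ ?_⟩
  have hsub' : σ '' (T d ∪ S d ∪ {w d}) ⊆ A :=
    (Set.image_mono (Set.subset_biUnion_of_mem (u := fun d ↦ T d ∪ S d ∪ {w d}) hd)).trans hsub
  have hpA : HasUnitPart w σ A (p d) :=
    hTp d A ((Set.image_mono fun γ h ↦ Or.inl (Or.inl h)).trans hsub')
  have hqA : HasUnitPart w σ A (q d) :=
    hSq d A ((Set.image_mono fun γ h ↦ Or.inl (Or.inr h)).trans hsub')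
  have hwq : w (q d) ≠ 0 := w.ne_zero_iff.2 (hq0 d)
  have hwd : w (p d) / w (q d) = w d := by rw [hpq, map_mul, mul_div_cancel_left₀ _ hwq]
  obtain ⟨c, hc, hpc⟩ := (hpA.mono hAO).exists_eq_mul (hqA.mono hAO) hO hσ hwq
    (hAO (hwd.symm ▸ hsub' ⟨w d, Or.inr rfl, rfl⟩))
  rwa [mul_left_cancel₀ (hq0 d) ((hpq d).symm.trans hpc)]

end Monomials

/-! ### Valuations with a multiplicative section -/

section Fields

open IntermediateField hiding adjoin

variable {k K M : Type*} [Field k] [Field K] [Algebra k K] [LinearOrderedCommGroupWithZero M]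
  {v : Valuation K M} {σ : M →*₀ K}

theorem exists_monoidWithZeroHom_rightInverse [Module.Free ℤ (Additive Mˣ)]
    (hv : Function.Surjective v) : ∃ σ : M →*₀ K, Function.RightInverse σ v := by
  classical
  let f : Additive Kˣ →ₗ[ℤ] Additive Mˣ :=
    (Units.map (v : K →* M)).toAdditive.toIntLinearMap
  have hf : Function.Surjective f := fun t ↦ by
    obtain ⟨x, hx⟩ := hv t.toMul
    have hx0 : x ≠ 0 := v.ne_zero_iff.1 (hx ▸ t.toMul.ne_zero)
    exact ⟨.ofMul (Units.mk0 x hx0), Additive.toMul.injective (Units.ext hx)⟩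
  obtain ⟨g, hg⟩ := Module.projective_lifting_property f LinearMap.id hf
  let s : Mˣ →* K := (Units.coeHom K).comp (MonoidHom.toAdditive.symm g.toAddMonoidHom)
  have hs (γ : Mˣ) : v (s γ) = γ :=
    congrArg (fun t : Additive Mˣ ↦ (t.toMul : M)) (LinearMap.congr_fun hg (.ofMul γ))
  let e : WithZero Mˣ ≃* M := WithZero.withZeroUnitsEquiv
  refine ⟨(WithZero.lift' s).comp e.symm.toMonoidWithZeroHom, fun γ ↦ ?_⟩
  obtain ⟨x, rfl⟩ := e.surjective γ
  induction x <;> simp [e, hs]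

/-- The corestriction of a homomorphism with values in an intermediate field. -/
def codRestrictField (F : IntermediateField k K) (σ : M →*₀ K) (h : ∀ γ, σ γ ∈ F) : M →*₀ F where
  toFun γ := ⟨σ γ, h γ⟩
  map_zero' := Subtype.ext (map_zero σ)
  map_one' := Subtype.ext (map_one σ)
  map_mul' a b := Subtype.ext (map_mul σ a b)

theorem exists_mem_span_range_codRestrictField {F : IntermediateField k K} (hF : ∀ γ, σ γ ∈ F)
    {x : K} (hx : x ∈ Algebra.adjoin k (Set.range σ)) :
    ∃ y ∈ Submodule.span k (Set.range (codRestrictField F σ hF)), (y : K) = x := by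
  have hspan : Subalgebra.toSubmodule (Algebra.adjoin k (Set.range σ)) =
      Submodule.span k (Set.range σ) := by
    have hclosure : Submonoid.closure (Set.range σ) ≤ MonoidHom.mrange (σ : M →* K) :=
      Submonoid.closure_le.2 fun x hx ↦ hx
    exact Algebra.adjoin_eq_span_of_subset _
      (Set.Subset.trans hclosure Submodule.subset_span)
  have hrange : Set.range σ = F.val.toLinearMap '' Set.range (codRestrictField F σ hF) := by
    rw [← Set.range_comp]
    rfl
  rwa [← Subalgebra.mem_toSubmodule, hspan, hrange, ← Submodule.map_span] at hx

theorem hasLocalCompleteIntersections_adjoin_range [v.IsTrivialOn k] (hσ : ∀ γ, v (σ γ) = γ) :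
    HasLocalCompleteIntersections k
      (v.comap (algebraMap (IntermediateField.adjoin k (Set.range σ)) K)) := by
  set F := IntermediateField.adjoin k (Set.range σ)
  have hmem : ∀ γ, σ γ ∈ F := fun γ ↦ subset_adjoin k _ ⟨γ, rfl⟩
  have : (v.comap (algebraMap F K)).IsTrivialOn k :=
    ⟨fun c hc ↦ Valuation.IsTrivialOn.eq_one (v := v) c hc⟩
  refine .of_forall_exists_mem_span (σ := codRestrictField F σ hmem) hσ ?_
  rintro ⟨d, hd⟩
  obtain ⟨p, hp, q, hq, rfl⟩ := mem_adjoin_iff_div.1 hd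
  obtain rfl | hq0 := eq_or_ne q 0
  · exact ⟨0, zero_mem _, 1, Submodule.subset_span ⟨1, map_one _⟩, one_ne_zero,
      Subtype.ext (by simp)⟩
  obtain ⟨p', hp', rfl⟩ := exists_mem_span_range_codRestrictField hmem hp
  obtain ⟨q', hq', rfl⟩ := exists_mem_span_range_codRestrictField hmem hq
  exact ⟨p', hp', q', hq', fun h ↦ hq0 (by simp [h]),
    Subtype.ext (mul_div_cancel₀ (p' : K) hq0).symm⟩

theorem HasLocalCompleteIntersections.restrictScalars_adjoin_simple {F : IntermediateField k K}
    (h : HasLocalCompleteIntersections k (v.comap (algebraMap F K))) (hF : ∀ γ, σ γ ∈ F)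
    (hσ : ∀ γ, v (σ γ) = γ) {y : K} (hy : v y ≤ 1) :
    HasLocalCompleteIntersections k
      (v.comap (algebraMap ((IntermediateField.adjoin F {y}).restrictScalars k) K)) := by
  change HasLocalCompleteIntersections k (v.comap (algebraMap (IntermediateField.adjoin F {y}) K))
  refine .of_adjoin_eq_top (L := F) (σ := codRestrictField F σ hF) (y := AdjoinSimple.gen F y)
    h hσ hy (lift_injective _ ?_)
  rw [lift_adjoin_simple, lift_top, AdjoinSimple.coe_gen]

theorem hasLocalCompleteIntersections_adjoin_range_union [v.IsTrivialOn k]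
    (hσ : ∀ γ, v (σ γ) = γ) {T : Set K} (hT : T.Finite) (hT1 : ∀ y ∈ T, v y ≤ 1) :
    HasLocalCompleteIntersections k
      (v.comap (algebraMap (IntermediateField.adjoin k (Set.range σ ∪ T)) K)) := by
  induction T, hT using Set.Finite.induction_on with
  | empty =>
    rw [Set.union_empty]
    exact hasLocalCompleteIntersections_adjoin_range hσ
  | @insert y T _ _ ih =>
    have h := (ih fun y hy ↦ hT1 y (Set.mem_insert_of_mem _ hy)).restrictScalars_adjoin_simple
      (fun γ ↦ subset_adjoin k _ (Or.inl ⟨γ, rfl⟩)) hσ (hT1 y (Set.mem_insert _ _))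
    rwa [adjoin_adjoin_left, Set.union_assoc, Set.union_singleton] at h

variable (k) in
theorem exists_isCompleteIntersectionOfFiniteType_superset [v.IsTrivialOn k]
    (hσ : ∀ γ, v (σ γ) = γ) {D : Set K} (hD : D.Finite) (hD1 : ∀ d ∈ D, v d ≤ 1) :
    ∃ A : Subalgebra k K, IsCompleteIntersectionOfFiniteType k A ∧ (∀ a ∈ A, v a ≤ 1) ∧
      D ⊆ A := by
  set F := IntermediateField.adjoin k (Set.range σ ∪ D)
  obtain ⟨O, hO, hDO⟩ := hasLocalCompleteIntersections_adjoin_range_union (k := k) hσ hD hD1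
    (algebraMap F K ⁻¹' D) (hD.preimage (algebraMap F K).injective.injOn) fun d hd ↦ hD1 _ hd
  have hO' := hO.map_of_injective (ψ := F.val) (w := v) (fun x ↦ rfl) F.val.injective
  obtain ⟨A, hA, hDA⟩ := hO'.exists_model_superset hD fun d hd ↦
    ⟨⟨d, subset_adjoin k _ (Or.inr hd)⟩, hDO hd, rfl⟩
  exact ⟨A, hA.isCompleteIntersection, fun a ha ↦ hO'.le_one a (hA.le ha), hDA⟩

end Fields

theorem isFilteredUnion_of_forall_finite {R S : Type*} [CommSemiring R] [CommSemiring S]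
    [Algebra R S] {C : Subalgebra R S → Prop} (hC : ∀ A, C A → A.FG)
    (h : ∀ D : Set S, D.Finite → ∃ A, C A ∧ D ⊆ A) : Subalgebra.IsFilteredUnion C := by
  refine ⟨?_, fun A hA B hB ↦ ?_, fun s ↦ ?_⟩
  · obtain ⟨A, hA, -⟩ := h ∅ Set.finite_empty
    exact ⟨A, hA⟩
  · obtain ⟨S, rfl⟩ := hC A hA
    obtain ⟨T, rfl⟩ := hC B hB
    obtain ⟨E, hE, hSTE⟩ := h (S ∪ T) (S.finite_toSet.union T.finite_toSet)
    exact ⟨E, hE, adjoin_le (Set.subset_union_left.trans hSTE),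
      adjoin_le (Set.subset_union_right.trans hSTE)⟩
  · obtain ⟨A, hA, hs⟩ := h {s} (Set.finite_singleton s)
    exact ⟨A, hA, hs rfl⟩

theorem valuation_ring_filtered_union_complete_intersection_general {k V K : Type*} [Field k]
    [CommRing V] [IsDomain V] [ValuationRing V] [Algebra k V] [Field K] [Algebra V K]
    [IsFractionRing V K] [Algebra k K] [IsScalarTower k V K]
    (σ : ValuationRing.ValueGroup V K →*₀ K)
    (hσ : Function.RightInverse σ (ValuationRing.valuation V K)) :
    Subalgebra.IsFilteredUnion fun A : Subalgebra k V ↦ IsCompleteIntersectionOfFiniteType k A := by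
  have hinteger (x : K) : ValuationRing.valuation V K x ≤ 1 ↔ ∃ a : V, algebraMap V K a = x :=
    ValuationRing.mem_integer_iff V K x
  have : (ValuationRing.valuation V K).IsTrivialOn k := isTrivialOn_of_forall_le_one fun c ↦
    (hinteger _).2 ⟨algebraMap k V c, (IsScalarTower.algebraMap_apply k V K c).symm⟩
  refine isFilteredUnion_of_forall_finite (fun A hA ↦ A.fg_iff_finiteType.2 hA.finiteType)
    fun D hD ↦ ?_
  obtain ⟨A, hA, hA1, hDA⟩ := exists_isCompleteIntersectionOfFiniteType_superset k hσ
    (hD.image (algebraMap V K)) (Set.forall_mem_image.2 fun d _ ↦ (hinteger _).2 ⟨d, rfl⟩)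
  let ψ : V →ₐ[k] K := IsScalarTower.toAlgHom k V K
  have hmap : (A.comap ψ).map ψ = A := Subalgebra.map_comap_eq_self fun a ha ↦
    (hinteger a).1 (hA1 a ha)
  rw [← hmap] at hA
  exact ⟨A.comap ψ, hA.of_algEquiv
    ((A.comap ψ).equivMapOfInjective ψ (IsFractionRing.injective V K)).symm,
    fun d hd ↦ hDA ⟨d, hd, rfl⟩⟩

/-- Let `V` be a valuation ring containing its residue field `k`, with fraction field
`K` and value group a free abelian group.  Then `V` is a filtered union of its
`k`-subalgebras which are complete intersection `k`-algebras. -/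
theorem valuation_ring_filtered_union_complete_intersection
    (k V K : Type u) [Field k] [CommRing V] [IsDomain V] [ValuationRing V] [Algebra k V]
    [Field K] [Algebra V K] [IsFractionRing V K] [Algebra k K] [IsScalarTower k V K]
    -- `V` contains its residue field `k`:
    (hres : Function.Bijective ((IsLocalRing.residue V).comp (algebraMap k V)))
    -- the value group `Γ` is a free abelian group:
    (hfree : Module.Free ℤ (Additive (ValuationRing.ValueGroup V K)ˣ)) :
    Subalgebra.IsFilteredUnion (fun A : Subalgebra k V =>
      Algebra.IsCompleteIntersectionOfFiniteType k A) := by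
  obtain ⟨σ, hσ⟩ := exists_monoidWithZeroHom_rightInverse
    (v := ValuationRing.valuation V K) Quotient.mk''_surjective
  exact valuation_ring_filtered_union_complete_intersection_general σ hσ
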